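/- For every τ ∈ (0,1) there exists ν₀ ∈ (0,1) such that for every ν ∈ (0, ν₀] there exists μ₀ > 0 such that for every μ ∈ (0, μ₀] there exists n₀ ∈ ℕ such that for every n ≥ n₀ the following holds: if G = (A ∪ B, E) is a bipartite robust (ν,τ)-expander on 2n vertices with minimum degree at least n/2, then for every μn-bounded system of conflicts F for E(G) there exists a perfect matching of G that is F-conflict-free. -/

import Mathlib

/-- The `ν`-robust neighbourhood of `X`: vertices with at least `ν n` neighbours in `X`. -/
def robustNbhd {V : Type*} (G : SimpleGraph V) (n : ℕ) (ν : ℝ) (X : Set V) : Set V :=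
  {v : V | ν * n ≤ ((G.neighborSet v ∩ X).ncard : ℝ)}

/-- Bipartite robust `(ν,τ)`-expander. -/
def BipRobustExpander {V : Type*} (G : SimpleGraph V) (A B : Set V) (n : ℕ)
    (ν τ : ℝ) : Prop :=
  ∀ X : Set V, (X ⊆ A ∨ X ⊆ B) → τ * n ≤ (X.ncard : ℝ) → (X.ncard : ℝ) ≤ (1 - τ) * n →
    (X.ncard : ℝ) + ν * n ≤ ((robustNbhd G n ν X).ncard : ℝ)

/-!
The argument is a dichotomy, as in stability proofs of Dirac-type theorems.

If every two half-sized sets of `A` and `B` span many edges, then every perfect matching has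
quadratically many alternating hexagons through each of its edges. Switching along them shows that
a uniformly random perfect matching uses two given disjoint edges with probability `O(1 / n ^ 2)`,
robustly under conditioning on the conflicts avoided elsewhere, so the lopsided local lemma yields a
conflict-free one.

Otherwise the graph is close to a disjoint union of two complete bipartite graphs on parts of size
about `n / 2`. The few vertices with many neighbours across are first moved so as to balance the
blocks. The imbalance that remains is repaired by as many disjoint crossing edges, chosen without
conflicts and such that they poison, through the conflict system, only a few edges at each vertex.
The blocks that are left are almost complete, and switching inside them finishes the matching.
-/

namespace ConflictFreeMatching

open Finset
open scoped Classical

section Counting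

variable {ι α β : Type*}

lemma cast_card_le_add_of_subset_union [DecidableEq ι] {U V W : Finset ι} (h : U ⊆ V ∪ W) :
    (#U : ℝ) ≤ #V + #W := by
  exact_mod_cast (card_le_card h).trans (card_union_le V W)

lemma card_filter_fst_mem [Fintype α] [Fintype β] [DecidableEq α] (P : α → β → Prop)
    [∀ a b, Decidable (P a b)] (S : Finset α) :
    #{z : α × β | z.1 ∈ S ∧ P z.1 z.2} = ∑ a ∈ S, #{b | P a b} := by
  have hprod : ({z : α × β | z.1 ∈ S ∧ P z.1 z.2} : Finset _) =
      {z ∈ S ×ˢ (univ : Finset β) | P z.1 z.2} := by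
    ext z
    simp only [mem_filter, mem_univ, true_and, mem_product, and_true]
  rw [hprod, card_filter, sum_product]
  simp only [card_filter]

lemma card_filter_snd_mem [Fintype α] [Fintype β] [DecidableEq β] (P : α → β → Prop)
    [∀ a b, Decidable (P a b)] (T : Finset β) :
    #{z : α × β | z.2 ∈ T ∧ P z.1 z.2} = ∑ b ∈ T, #{a | P a b} := by
  rw [← card_filter_fst_mem (fun b a => P a b)]
  exact card_equiv (Equiv.prodComm α β) fun z => by
    simp only [mem_filter, mem_univ, true_and, Equiv.prodComm_apply, Prod.fst_swap, Prod.snd_swap]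

lemma card_filter_exists_mem_le [Fintype ι] (S : Finset α) (P : α → ι → Prop) :
    #{i | ∃ a ∈ S, P a i} ≤ ∑ a ∈ S, #{i | P a i} := by
  refine (card_le_card fun i hi => ?_).trans card_biUnion_le
  simpa only [mem_filter, mem_biUnion, mem_univ, true_and] using hi

end Counting

section LocalLemma

variable {Ω ι : Type*} {Ω₀ : Finset Ω} {B : ι → Ω → Prop} {S T : Finset ι}

/-- The outcomes of the sample space `Ω₀` in which none of the bad events `B c`, `c ∈ S`, occurs. -/
noncomputable def avoiding (Ω₀ : Finset Ω) (B : ι → Ω → Prop) (S : Finset ι) : Finset Ω :=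
  {w ∈ Ω₀ | ∀ c ∈ S, ¬ B c w}

lemma mem_avoiding {w : Ω} : w ∈ avoiding Ω₀ B S ↔ w ∈ Ω₀ ∧ ∀ c ∈ S, ¬ B c w := by
  rw [avoiding, mem_filter]

lemma avoiding_empty : avoiding Ω₀ B ∅ = Ω₀ := by simp [avoiding]

lemma avoiding_anti (h : S ⊆ T) : avoiding Ω₀ B T ⊆ avoiding Ω₀ B S :=
  monotone_filter_right _ fun _ _ hw c hc => hw c (h hc)

lemma avoiding_subset_union_biUnion (S R : Finset ι) :
    avoiding Ω₀ B (S \ R) ⊆ avoiding Ω₀ B S ∪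
      (S ∩ R).biUnion fun c => {w ∈ avoiding Ω₀ B (S \ R) | B c w} := by
  intro w hw
  simp only [mem_avoiding, mem_union, mem_biUnion, mem_filter, mem_inter, mem_sdiff] at hw ⊢
  by_cases h : ∃ c ∈ S ∩ R, B c w
  · obtain ⟨c, hc, hBc⟩ := h
    exact .inr ⟨c, mem_inter.1 hc, hw, hBc⟩
  · refine .inl ⟨hw.1, fun c hc hBc => ?_⟩
    by_cases hcR : c ∈ R
    · exact h ⟨c, mem_inter.2 ⟨hc, hcR⟩, hBc⟩
    · exact hw.2 c ⟨hc, hcR⟩ hBc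

variable {Γ : ι → Finset ι} {p D : ℝ}

lemma card_avoiding_filter_le (hp : 0 ≤ p) (hpD : 4 * p * D ≤ 1)
    (hΓ : ∀ c ∈ T, (#(Γ c) : ℝ) ≤ D)
    (hB : ∀ c ∈ T, ∀ S ⊆ T, Disjoint S (Γ c) →
      (#{w ∈ avoiding Ω₀ B S | B c w} : ℝ) ≤ p * #(avoiding Ω₀ B S)) (hS : S ⊆ T) :
    ∀ c ∈ T, (#{w ∈ avoiding Ω₀ B S | B c w} : ℝ) ≤ 2 * p * #(avoiding Ω₀ B S) := by
  induction S using Finset.strongInduction with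
  | H S ih =>
  intro c hc
  set N := avoiding Ω₀ B (S \ Γ c)
  have hN : (#N : ℝ) ≤ 2 * #(avoiding Ω₀ B S) := by
    rcases (S ∩ Γ c).eq_empty_or_nonempty with hemp | hne
    · simp only [N, sdiff_eq_self_of_disjoint (disjoint_iff_inter_eq_empty.2 hemp)]
      linarith [(#(avoiding Ω₀ B S)).cast_nonneg (α := ℝ)]
    have hlt : S \ Γ c ⊂ S := by
      refine ⟨sdiff_subset, fun h => ?_⟩
      obtain ⟨x, hx⟩ := hne
      exact (mem_sdiff.1 (h (mem_inter.1 hx).1)).2 (mem_inter.1 hx).2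
    have hsum : ∑ c' ∈ S ∩ Γ c, (#{w ∈ N | B c' w} : ℝ) ≤ D * (2 * p * #N) :=
      calc _ ≤ ∑ _c' ∈ S ∩ Γ c, 2 * p * (#N : ℝ) := sum_le_sum fun c' hc' =>
              ih _ hlt (hlt.1.trans hS) c' (hS (mem_inter.1 hc').1)
        _ = #(S ∩ Γ c) * (2 * p * #N) := by rw [sum_const, nsmul_eq_mul]
        _ ≤ D * (2 * p * #N) := by
              gcongr
              exact (Nat.cast_le.2 (card_le_card inter_subset_right)).trans (hΓ c hc)
    have hcover : (#N : ℝ) ≤ #(avoiding Ω₀ B S) + ∑ c' ∈ S ∩ Γ c, (#{w ∈ N | B c' w} : ℝ) :=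
      (cast_card_le_add_of_subset_union (avoiding_subset_union_biUnion S (Γ c))).trans
        (add_le_add_right (mod_cast card_biUnion_le) _)
    nlinarith [(#N).cast_nonneg (α := ℝ)]
  calc (#{w ∈ avoiding Ω₀ B S | B c w} : ℝ) ≤ #{w ∈ N | B c w} :=
        mod_cast card_le_card (filter_subset_filter _ (avoiding_anti sdiff_subset))
    _ ≤ p * #N := hB c hc _ (sdiff_subset.trans hS) sdiff_disjoint
    _ ≤ p * (2 * #(avoiding Ω₀ B S)) := by gcongr
    _ = 2 * p * #(avoiding Ω₀ B S) := by ring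

-- The lopsided local lemma for a uniform distribution, with conditional probabilities cleared of
-- denominators.
theorem avoiding_nonempty (hp : 0 ≤ p) (hD : 1 ≤ D) (hpD : 4 * p * D ≤ 1)
    (hΩ : Ω₀.Nonempty) (hΓ : ∀ c ∈ T, (#(Γ c) : ℝ) ≤ D)
    (hB : ∀ c ∈ T, ∀ S ⊆ T, Disjoint S (Γ c) →
      (#{w ∈ avoiding Ω₀ B S | B c w} : ℝ) ≤ p * #(avoiding Ω₀ B S)) :
    (avoiding Ω₀ B T).Nonempty := by
  suffices h : ∀ S ⊆ T, (avoiding Ω₀ B S).Nonempty from h T subset_rfl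
  intro S
  induction S using Finset.induction_on with
  | empty => simpa only [avoiding_empty] using fun _ => hΩ
  | insert c S _ ih =>
    intro hcS
    have hST : S ⊆ T := (subset_insert c S).trans hcS
    have hlt : #{w ∈ avoiding Ω₀ B S | B c w} < #(avoiding Ω₀ B S) := by
      have hle := card_avoiding_filter_le hp hpD hΓ hB hST c (hcS (mem_insert_self c S))
      have hpos : (0 : ℝ) < #(avoiding Ω₀ B S) := mod_cast (ih hST).card_pos
      exact_mod_cast show (#{w ∈ avoiding Ω₀ B S | B c w} : ℝ) < #(avoiding Ω₀ B S) by
        nlinarith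
    obtain ⟨w, hw, hBw⟩ := exists_mem_notMem_of_card_lt_card hlt
    refine ⟨w, mem_avoiding.2 ⟨(mem_avoiding.1 hw).1, ?_⟩⟩
    rw [forall_mem_insert]
    exact ⟨fun h => hBw (mem_filter.2 ⟨hw, h⟩), (mem_avoiding.1 hw).2⟩

end LocalLemma

section Conflicts

variable {ε : Type*} [Fintype ε]

/-- A symmetric conflict relation on a finite type of edges in which every edge is in conflict with
at most `k` edges. -/
structure BoundedConflicts (C : ε → ε → Prop) (k : ℝ) : Prop where
  symm : ∀ e f, C e f → C f e
  card_le : ∀ e, (#{f | C e f} : ℝ) ≤ k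

lemma BoundedConflicts.card_exists_le {ι : Type*} [Fintype ι] {C : ε → ε → Prop} {k : ℝ}
    (hC : BoundedConflicts C k) (e : ι → ε) :
    (#{f | ∃ i, C (e i) f} : ℝ) ≤ Fintype.card ι * k := by
  have hcover : #{f | ∃ i, C (e i) f} ≤ ∑ i, #{f | C (e i) f} := by
    simpa only [mem_univ, true_and] using card_filter_exists_mem_le univ fun i f => C (e i) f
  calc (#{f | ∃ i, C (e i) f} : ℝ) ≤ ∑ i, (#{f | C (e i) f} : ℝ) := mod_cast hcover
    _ ≤ Fintype.card ι * k := by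
        rw [← nsmul_eq_mul, ← card_univ]
        exact sum_le_card_nsmul _ _ _ fun i _ => hC.card_le (e i)

lemma BoundedConflicts.sum_card_le {ι : Type*} [Fintype ι] {C : ε → ε → Prop} {k : ℝ}
    (hC : BoundedConflicts C k) (X : Finset ε) (e : ι → ε) :
    ((∑ f ∈ X, #{i | C f (e i)} : ℕ) : ℝ) ≤ Fintype.card ι * k := by
  have hflip : ∀ i, (#{f ∈ X | C f (e i)} : ℝ) ≤ k := fun i =>
    (Nat.cast_le.2 (card_le_card fun f hf =>
      mem_filter.2 ⟨mem_univ f, hC.symm _ _ (mem_filter.1 hf).2⟩)).trans (hC.card_le (e i))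
  have hswap : ∑ f ∈ X, #{i | C f (e i)} = ∑ i, #{f ∈ X | C f (e i)} := by
    simp only [card_filter]
    exact sum_comm
  rw [hswap, Nat.cast_sum, ← nsmul_eq_mul, ← card_univ]
  exact sum_le_card_nsmul _ _ _ fun i _ => hflip i

end Conflicts

section Switching

variable {α β : Type*}

/-- The bijection obtained from `σ` by rerouting `a ↦ σ x`, `x ↦ σ y` and `y ↦ σ a`, for distinct
`a`, `x`, `y`. For perfect matchings it exchanges every second edge of an alternating hexagon. -/
noncomputable def switch (σ : α ≃ β) (a x y : α) : α ≃ β :=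
  (Equiv.swap a x * Equiv.swap x y).trans σ

variable {σ : α ≃ β} {a x y : α}

lemma switch_apply_first (hx : x ≠ a) (hy : y ≠ a) : switch σ a x y a = σ x := by
  rw [switch, Equiv.trans_apply, Equiv.Perm.mul_apply,
    Equiv.swap_apply_of_ne_of_ne hx.symm hy.symm, Equiv.swap_apply_left]

lemma switch_apply_second (hy : y ≠ a) (hxy : x ≠ y) : switch σ a x y x = σ y := by
  rw [switch, Equiv.trans_apply, Equiv.Perm.mul_apply, Equiv.swap_apply_left,
    Equiv.swap_apply_of_ne_of_ne hy hxy.symm]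

lemma switch_apply_third : switch σ a x y y = σ a := by
  rw [switch, Equiv.trans_apply, Equiv.Perm.mul_apply, Equiv.swap_apply_right,
    Equiv.swap_apply_right]

lemma switch_apply_of_ne {z : α} (ha : z ≠ a) (hx : z ≠ x) (hy : z ≠ y) :
    switch σ a x y z = σ z := by
  rw [switch, Equiv.trans_apply, Equiv.Perm.mul_apply, Equiv.swap_apply_of_ne_of_ne hx hy,
    Equiv.swap_apply_of_ne_of_ne ha hx]

lemma switch_injective (a x y : α) :
    Function.Injective fun σ : α ≃ β => switch σ a x y := fun σ τ h =>
  Equiv.ext fun z => by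
    simpa [switch] using congrArg (· ((Equiv.swap a x * Equiv.swap x y).symm z)) h

variable [Fintype α]

-- A switched bijection `τ` and `x` determine `y` as the preimage of `b` under `τ`, hence also the
-- bijection that was switched.
lemma card_filter_apply_eq_mul_le (𝒢 : Finset (α ≃ β)) (a : α) (b : β) {L : ℝ}
    (W : (α ≃ β) → Finset (α × α)) (hL : ∀ σ ∈ 𝒢, L ≤ #(W σ))
    (hW : ∀ σ ∈ 𝒢, σ a = b → ∀ z ∈ W σ, switch σ a z.1 z.2 ∈ 𝒢) :
    (#{σ ∈ 𝒢 | σ a = b} : ℝ) * L ≤ #𝒢 * Fintype.card α := by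
  have hinj : #({σ ∈ 𝒢 | σ a = b}.sigma W) ≤ #(𝒢 ×ˢ (univ : Finset α)) := by
    refine card_le_card_of_injOn (fun t => (switch t.1 a t.2.1 t.2.2, t.2.1)) ?_ ?_
    · rintro ⟨σ, z⟩ ht
      obtain ⟨hσ, hz⟩ := mem_sigma.1 (mem_coe.1 ht)
      obtain ⟨hσ, hb⟩ := mem_filter.1 hσ
      exact mem_coe.2 (mem_product.2 ⟨hW σ hσ hb z hz, mem_univ _⟩)
    · rintro ⟨σ, x, y⟩ ht ⟨σ', x', y'⟩ ht' heq
      have hb : σ a = b := (mem_filter.1 (mem_sigma.1 (mem_coe.1 ht)).1).2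
      have hb' : σ' a = b := (mem_filter.1 (mem_sigma.1 (mem_coe.1 ht')).1).2
      obtain ⟨hswitch, rfl⟩ := Prod.mk.inj heq
      obtain rfl : y = y' := (switch σ a x y).injective <| by
        dsimp only at hswitch
        rw [switch_apply_third, hswitch, switch_apply_third, hb, hb']
      obtain rfl : σ = σ' := switch_injective a x y hswitch
      rfl
  calc (#{σ ∈ 𝒢 | σ a = b} : ℝ) * L ≤ ∑ σ ∈ 𝒢 with σ a = b, (#(W σ) : ℝ) := by
        rw [← nsmul_eq_mul]
        exact card_nsmul_le_sum _ _ _ fun σ hσ => hL σ (mem_filter.1 hσ).1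
    _ ≤ #𝒢 * Fintype.card α := by
        rw [card_sigma, card_product, card_univ] at hinj
        exact_mod_cast hinj

variable [Fintype β] {E : α → β → Prop} {C : α × β → α × β → Prop}

/-- The perfect matchings between `α` and `β` all of whose edges belong to `E`, as bijections. -/
noncomputable def perfectMatchings (E : α → β → Prop) : Finset (α ≃ β) :=
  {σ | ∀ a, E a (σ a)}

lemma mem_perfectMatchings {σ : α ≃ β} : σ ∈ perfectMatchings E ↔ ∀ a, E a (σ a) := by
  simp only [perfectMatchings, mem_filter, mem_univ, true_and]

/-- The bijection `σ` contains both edges of the pair `c`. -/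
def ContainsPair (c : (α × β) × (α × β)) (σ : α ≃ β) : Prop :=
  σ c.1.1 = c.1.2 ∧ σ c.2.1 = c.2.2

/-- There is a perfect matching between `α` and `β` with all edges in `E` and without two
conflicting edges. -/
def HasConflictFreeMatching {α β : Type*} (E : α → β → Prop) (C : α × β → α × β → Prop) : Prop :=
  ∃ σ : α ≃ β, (∀ a, E a (σ a)) ∧ ∀ a a', a ≠ a' → ¬ C (a, σ a) (a', σ a')

/-- The pairs `(x, y)` for which switching `σ` at `a`, `x`, `y` introduces only edges of `E`. -/
noncomputable def hexagons (E : α → β → Prop) (σ : α ≃ β) (a : α) : Finset (α × α) :=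
  {z | E a (σ z.1) ∧ E z.1 (σ z.2) ∧ E z.2 (σ a)}

/-- The hexagons through `a` that avoid the edges of `P` and whose new edge not meeting the edge of
`σ` at `a` is in conflict with no edge of `σ`. -/
noncomputable def safeHexagons (E : α → β → Prop) (C : α × β → α × β → Prop)
    (P : Finset (α × β)) (σ : α ≃ β) (a : α) : Finset (α × α) :=
  {z ∈ hexagons E σ a | z.1 ≠ a ∧ z.2 ≠ a ∧ z.1 ≠ z.2 ∧ (∀ e ∈ P, e.1 ≠ z.1 ∧ e.1 ≠ z.2) ∧
    ∀ u, ¬ C (u, σ u) (z.1, σ z.2)}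

/-- The perfect matchings in `E` that contain all edges of `P` and no pair of `S`. -/
noncomputable def matchingFamily (E : α → β → Prop) (S : Finset ((α × β) × (α × β)))
    (P : Finset (α × β)) : Finset (α ≃ β) :=
  {σ ∈ avoiding (perfectMatchings E) ContainsPair S | ∀ e ∈ P, σ e.1 = e.2}

lemma mem_matchingFamily {S : Finset ((α × β) × (α × β))} {P : Finset (α × β)} {σ : α ≃ β} :
    σ ∈ matchingFamily E S P ↔
      (∀ a, E a (σ a)) ∧ (∀ c ∈ S, ¬ ContainsPair c σ) ∧ ∀ e ∈ P, σ e.1 = e.2 := by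
  simp only [matchingFamily, mem_avoiding, mem_perfectMatchings, mem_filter, and_assoc]

lemma switch_mem_matchingFamily {S : Finset ((α × β) × (α × β))} {P : Finset (α × β)} {σ : α ≃ β}
    {a : α} {z : α × α} (hsymm : ∀ e f, C e f → C f e)
    (hS : ∀ c ∈ S, C c.1 c.2 ∧ c.1.1 ≠ c.2.1)
    (hdisj : ∀ c ∈ S, c.1.1 ≠ a ∧ c.1.2 ≠ σ a ∧ c.2.1 ≠ a ∧ c.2.2 ≠ σ a) (hP : ∀ e ∈ P, e.1 ≠ a)
    (hσ : σ ∈ matchingFamily E S P) (hz : z ∈ safeHexagons E C P σ a) :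
    switch σ a z.1 z.2 ∈ matchingFamily E S P := by
  obtain ⟨x, y⟩ := z
  simp only [safeHexagons, hexagons, mem_filter, mem_univ, true_and] at hz
  obtain ⟨⟨hax, hxσy, hya⟩, hx, hy, hxy, hPz, hsafe⟩ := hz
  obtain ⟨hE, hpairs, hpin⟩ := mem_matchingFamily.1 hσ
  have hold : ∀ u v, u ≠ a → v ≠ σ a → u ≠ x → switch σ a x y u = v → σ u = v := by
    rintro u _ hua hva hux rfl
    have huy : u ≠ y := by
      rintro rfl
      exact hva switch_apply_third
    exact (switch_apply_of_ne hua hux huy).symm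
  refine mem_matchingFamily.2 ⟨fun u => ?_, ?_, fun e he => ?_⟩
  · by_cases hua : u = a
    · rwa [hua, switch_apply_first hx hy]
    by_cases hux : u = x
    · rwa [hux, switch_apply_second hy hxy]
    by_cases huy : u = y
    · rwa [huy, switch_apply_third]
    rw [switch_apply_of_ne hua hux huy]
    exact hE u
  · rintro ⟨⟨u, v⟩, ⟨u', v'⟩⟩ hc ⟨huv, huv'⟩
    obtain ⟨hconf, hne⟩ := hS _ hc
    obtain ⟨hu, hv, hu', hv'⟩ := hdisj _ hc
    dsimp only at huv huv' hconf hne hu hv hu' hv'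
    by_cases hux : u = x
    · rw [hux, switch_apply_second hy hxy] at huv
      have h' := hold u' v' hu' hv' (fun h => hne (hux.trans h.symm)) huv'
      exact hsafe u' (by rw [h', huv, ← hux]; exact hsymm _ _ hconf)
    by_cases hux' : u' = x
    · rw [hux', switch_apply_second hy hxy] at huv'
      have h := hold u v hu hv hux huv
      exact hsafe u (by rw [h, huv', ← hux']; exact hconf)
    exact hpairs _ hc ⟨hold u v hu hv hux huv, hold u' v' hu' hv' hux' huv'⟩
  · rw [switch_apply_of_ne (hP e he) (hPz e he).1 (hPz e he).2]
    exact hpin e he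

lemma card_conflicting_new_edge_le {k : ℝ} (hC : BoundedConflicts C k) (σ : α ≃ β) :
    (#{z : α × α | ∃ u, C (u, σ u) (z.1, σ z.2)} : ℝ) ≤ Fintype.card α * k := by
  refine le_trans (Nat.cast_le.2 ?_) (hC.card_exists_le fun u => (u, σ u))
  refine card_le_card_of_injOn (Prod.map id σ) (fun z hz => ?_)
    (Function.injective_id.prodMap σ.injective).injOn
  exact mem_coe.2 (mem_filter.2 ⟨mem_univ _, (mem_filter.1 hz).2⟩)

lemma card_hexagons_le {k : ℝ} (hC : BoundedConflicts C k) {P : Finset (α × β)}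
    (hP : #P ≤ 1) (σ : α ≃ β) (a : α) :
    (#(hexagons E σ a) : ℝ) ≤
      #(safeHexagons E C P σ a) + Fintype.card α * (5 + k) := by
  set X : Finset α := insert a (P.image Prod.fst)
  have hX : (#X : ℝ) ≤ 2 := by
    exact_mod_cast (card_insert_le _ _).trans (Nat.succ_le_succ (card_image_le.trans hP))
  set Z : Finset (α × α) := {z | ∃ u, C (u, σ u) (z.1, σ z.2)}
  have hcover : hexagons E σ a ⊆ safeHexagons E C P σ a ∪
      (X ×ˢ univ ∪ (univ ×ˢ X ∪ (univ.diag ∪ Z))) := by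
    rintro ⟨x, y⟩ hz
    by_contra hcon
    simp only [X, Z, mem_union, mem_product, mem_univ, mem_diag, mem_insert, mem_image,
      safeHexagons, mem_filter, hz, true_and, and_true, not_or] at hcon
    grind
  have hcard : (#(hexagons E σ a) : ℝ) ≤ #(safeHexagons E C P σ a) +
      (#(X ×ˢ (univ : Finset α)) + (#((univ : Finset α) ×ˢ X) + (#(univ : Finset α).diag + #Z))) :=
    mod_cast (card_le_card hcover).trans ((card_union_le _ _).trans
      (add_le_add_right ((card_union_le _ _).trans
      (add_le_add_right ((card_union_le _ _).trans
      (add_le_add_right (card_union_le _ _) _)) _)) _))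
  rw [card_product, card_product, diag_card, card_univ] at hcard
  push_cast at hcard
  have hZ : (#Z : ℝ) ≤ Fintype.card α * k := card_conflicting_new_edge_le hC σ
  nlinarith [(Fintype.card α).cast_nonneg (α := ℝ)]

lemma card_matchingFamily_filter_le {n : ℕ} {k κ : ℝ} (hn : Fintype.card α = n)
    (hC : BoundedConflicts C k) (hkn : k ≤ κ * n / 4) (hκn : 20 ≤ κ * n)
    (hhex : ∀ σ : α ≃ β, (∀ a, E a (σ a)) → ∀ a, κ * n ^ 2 ≤ (#(hexagons E σ a) : ℝ))
    {S : Finset ((α × β) × (α × β))} {P : Finset (α × β)}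
    (hS : ∀ c ∈ S, C c.1 c.2 ∧ c.1.1 ≠ c.2.1) (hP : #P ≤ 1) {a : α} {b : β}
    (hPa : ∀ e ∈ P, e.1 ≠ a)
    (hdisj : ∀ c ∈ S, c.1.1 ≠ a ∧ c.1.2 ≠ b ∧ c.2.1 ≠ a ∧ c.2.2 ≠ b) :
    (#{σ ∈ matchingFamily E S P | σ a = b} : ℝ) ≤ 2 / (κ * n) * #(matchingFamily E S P) := by
  have hsafe : ∀ σ ∈ matchingFamily E S P, κ * n ^ 2 / 2 ≤ (#(safeHexagons E C P σ a) : ℝ) := by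
    intro σ hσ
    have hall := hhex σ (mem_matchingFamily.1 hσ).1 a
    have hloss := hall.trans (card_hexagons_le (E := E) hC hP σ a)
    rw [hn] at hloss
    nlinarith [n.cast_nonneg (α := ℝ)]
  have hcount := card_filter_apply_eq_mul_le _ a b (safeHexagons E C P · a) hsafe
    fun σ hσ hb z hz => switch_mem_matchingFamily hC.symm hS (by rwa [hb]) hPa hσ hz
  rw [hn] at hcount
  have hn0 : (0 : ℝ) < n := by
    rcases (n.cast_nonneg (α := ℝ)).eq_or_lt with h | h
    · rw [← h] at hκn; norm_num at hκn
    · exact h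
  rw [div_mul_eq_mul_div, le_div_iff₀ (by linarith)]
  refine le_of_mul_le_mul_right ?_ hn0
  linarith

end Switching

section LocalLemmaForMatchings

variable {α β : Type*} [Fintype α] [Fintype β] {E : α → β → Prop} {C : α × β → α × β → Prop}

/-- The edges that share an endpoint with one of the two edges of the pair `c`. -/
noncomputable def edgesMeeting (c : (α × β) × (α × β)) : Finset (α × β) :=
  {e | e.1 = c.1.1 ∨ e.2 = c.1.2 ∨ e.1 = c.2.1 ∨ e.2 = c.2.2}

/-- The pairs of conflicting edges that a bijection can contain. -/
noncomputable def conflictPairs (C : α × β → α × β → Prop) : Finset ((α × β) × (α × β)) :=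
  {c | C c.1 c.2 ∧ c.1.1 ≠ c.2.1}

/-- The conflicting pairs that share a vertex with the pair `c`. Switching at the edges of `c`
controls the conditional probability of `c` given that other conflicting pairs are avoided. -/
noncomputable def conflictPairsMeeting (C : α × β → α × β → Prop) (c : (α × β) × (α × β)) :
    Finset ((α × β) × (α × β)) :=
  {c' ∈ conflictPairs C | c'.1 ∈ edgesMeeting c ∨ c'.2 ∈ edgesMeeting c}

lemma card_edgesMeeting_le {n : ℕ} (hα : Fintype.card α = n) (hβ : Fintype.card β = n)
    (c : (α × β) × (α × β)) : #(edgesMeeting c) ≤ 4 * n := by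
  have hcover : edgesMeeting c ⊆ ({c.1.1, c.2.1} ×ˢ univ) ∪ (univ ×ˢ {c.1.2, c.2.2}) := by
    intro e he
    simp only [edgesMeeting, mem_filter, mem_univ, true_and] at he
    simp only [mem_union, mem_product, mem_insert, mem_singleton, mem_univ, and_true, true_and]
    tauto
  have hle := (card_le_card hcover).trans (card_union_le _ _)
  rw [card_product, card_product, card_univ, card_univ, hα, hβ] at hle
  nlinarith [card_le_two (a := c.1.1) (b := c.2.1), card_le_two (a := c.1.2) (b := c.2.2)]

lemma card_conflictPairsMeeting_le {n : ℕ} {k : ℝ} (hα : Fintype.card α = n)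
    (hβ : Fintype.card β = n) (hC : BoundedConflicts C k) (hk : 0 ≤ k) (c : (α × β) × (α × β)) :
    (#(conflictPairsMeeting C c) : ℝ) ≤ 8 * (n * k) := by
  have hcover : conflictPairsMeeting C c ⊆
      ({c' | c'.1 ∈ edgesMeeting c ∧ C c'.1 c'.2} : Finset ((α × β) × (α × β))) ∪
        ({c' | c'.2 ∈ edgesMeeting c ∧ C c'.1 c'.2} : Finset ((α × β) × (α × β))) := by
    intro c' hc'
    simp only [conflictPairsMeeting, conflictPairs, mem_union, mem_filter, mem_univ,
      true_and] at hc' ⊢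
    tauto
  have hsum : ∀ D : α × β → α × β → Prop, (∀ e, (#{f | D e f} : ℝ) ≤ k) →
      (∑ e ∈ edgesMeeting c, #{f | D e f} : ℝ) ≤ 4 * n * k := fun D hD =>
    calc _ ≤ #(edgesMeeting c) * k := by
          rw [← nsmul_eq_mul]
          exact sum_le_card_nsmul _ _ _ fun e _ => hD e
      _ ≤ 4 * n * k := by
          gcongr
          exact_mod_cast card_edgesMeeting_le hα hβ c
  have hle := cast_card_le_add_of_subset_union hcover
  rw [card_filter_fst_mem, card_filter_snd_mem] at hle
  push_cast at hle
  have hC' : ∀ f, (#{e | C e f} : ℝ) ≤ k := fun f => by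
    simpa only [fun e => (⟨hC.symm e f, hC.symm f e⟩ : C e f ↔ C f e)] using hC.card_le f
  linarith [hsum C hC.card_le, hsum (fun f e => C e f) hC']

lemma card_avoiding_filter_containsPair_le {n : ℕ} {k κ : ℝ} (hn : Fintype.card α = n)
    (hC : BoundedConflicts C k) (hkn : k ≤ κ * n / 4) (hκn : 20 ≤ κ * n)
    (hhex : ∀ σ : α ≃ β, (∀ a, E a (σ a)) → ∀ a, κ * n ^ 2 ≤ (#(hexagons E σ a) : ℝ))
    {c : (α × β) × (α × β)} (hc : c ∈ conflictPairs C) {S : Finset ((α × β) × (α × β))}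
    (hS : S ⊆ conflictPairs C) (hdisj : Disjoint S (conflictPairsMeeting C c)) :
    (#{σ ∈ avoiding (perfectMatchings E) ContainsPair S | ContainsPair c σ} : ℝ) ≤
      (2 / (κ * n)) ^ 2 * #(avoiding (perfectMatchings E) ContainsPair S) := by
  obtain ⟨⟨a, b⟩, ⟨a', b'⟩⟩ := c
  have hne : a ≠ a' := (mem_filter.1 hc).2.2
  have hS' : ∀ c ∈ S, C c.1 c.2 ∧ c.1.1 ≠ c.2.1 := fun c hc => (mem_filter.1 (hS hc)).2
  have hmeet : ∀ c' ∈ S, c'.1 ∉ edgesMeeting ((a, b), (a', b')) ∧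
      c'.2 ∉ edgesMeeting ((a, b), (a', b')) := fun c' hc' =>
    not_or.1 fun h => disjoint_left.1 hdisj hc' (mem_filter.2 ⟨hS hc', h⟩)
  simp only [edgesMeeting, mem_filter, mem_univ, true_and, not_or] at hmeet
  have hfst := card_matchingFamily_filter_le (P := {(a', b')}) hn hC hkn hκn hhex hS'
    (card_singleton _).le (a := a) (b := b)
    (by simpa using hne.symm) fun c hc => by grind
  have hsnd := card_matchingFamily_filter_le (P := ∅) hn hC hkn hκn hhex hS' (by simp)
    (a := a') (b := b') (by simp) fun c hc => by grind
  have hfree : matchingFamily E S ∅ = avoiding (perfectMatchings E) ContainsPair S := by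
    simp [matchingFamily]
  have hpin : {σ ∈ matchingFamily E S ∅ | σ a' = b'} = matchingFamily E S {(a', b')} := by
    ext σ
    simp [mem_matchingFamily, and_assoc]
  have hboth : {σ ∈ avoiding (perfectMatchings E) ContainsPair S |
      ContainsPair ((a, b), (a', b')) σ} = {σ ∈ matchingFamily E S {(a', b')} | σ a = b} := by
    ext σ
    rw [mem_filter, mem_filter, ← hpin, mem_filter, hfree, ContainsPair]
    tauto
  rw [hpin, hfree] at hsnd
  calc _ ≤ 2 / (κ * n) * (#(matchingFamily E S {(a', b')}) : ℝ) := by rw [hboth]; exact hfst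
    _ ≤ 2 / (κ * n) * (2 / (κ * n) * #(avoiding (perfectMatchings E) ContainsPair S)) := by
        gcongr
    _ = _ := by ring

theorem hasConflictFreeMatching_of_hexagons {n : ℕ} {k κ : ℝ} (hn : Fintype.card α = n)
    (hC : BoundedConflicts C k) (hk : 0 ≤ k) (hκ1 : κ ≤ 1) (hkn : k ≤ κ ^ 2 / 256 * n)
    (hκn : 20 ≤ κ * n)
    (hhex : ∀ σ : α ≃ β, (∀ a, E a (σ a)) → ∀ a, κ * n ^ 2 ≤ (#(hexagons E σ a) : ℝ))
    (hex : ∃ σ : α ≃ β, ∀ a, E a (σ a)) : HasConflictFreeMatching E C := by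
  obtain ⟨σ₀, hσ₀⟩ := hex
  have : 0 < κ := pos_of_mul_pos_left (by linarith) n.cast_nonneg
  have hnk : n * k ≤ (κ * n) ^ 2 / 256 := by nlinarith [n.cast_nonneg (α := ℝ)]
  have hpD : 4 * (2 / (κ * n)) ^ 2 * (8 * (n * k) + 1) ≤ 1 := by
    rw [div_pow, mul_div_assoc', div_mul_eq_mul_div, div_le_one (by positivity)]
    nlinarith
  obtain ⟨σ, hσ⟩ := avoiding_nonempty (Ω₀ := perfectMatchings E) (B := ContainsPair)
    (T := conflictPairs C) (Γ := conflictPairsMeeting C) (by positivity)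
    (le_add_of_nonneg_left (by positivity)) hpD
    ⟨σ₀, mem_perfectMatchings.2 hσ₀⟩
    (fun c _ => (card_conflictPairsMeeting_le hn (by rw [← hn, Fintype.card_congr σ₀]) hC hk
      c).trans (le_add_of_nonneg_right zero_le_one))
    fun c hc S hS hdisj => card_avoiding_filter_containsPair_le hn hC (by nlinarith) hκn hhex
      hc hS hdisj
  obtain ⟨hE, hσ⟩ := mem_avoiding.1 hσ
  exact ⟨σ, mem_perfectMatchings.1 hE, fun a a' hne hconf =>
    hσ ((a, σ a), (a', σ a')) (mem_filter.2 ⟨mem_univ _, hconf, hne⟩) ⟨rfl, rfl⟩⟩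

end LocalLemmaForMatchings

section Hall

variable {α β : Type*} [Fintype α] [Fintype β] {E : α → β → Prop}

lemma card_add_card_filter_le (X : Finset α) {p : α → Prop} (h : ∀ a ∈ X, ¬ p a) :
    #X + #{a | p a} ≤ Fintype.card α := by
  rw [← card_union_of_disjoint (disjoint_right.2 fun a ha haX => h a haX (mem_filter.1 ha).2)]
  exact card_le_univ _

theorem exists_matching_of_forall_card_add_card_le (hcard : Fintype.card α = Fintype.card β)
    (h : ∀ (X : Finset α) (Y : Finset β), (∀ a ∈ X, ∀ b ∈ Y, ¬ E a b) →
      #X + #Y ≤ Fintype.card β) : ∃ σ : α ≃ β, ∀ a, E a (σ a) := by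
  obtain ⟨f, hinj, hf⟩ := (Fintype.all_card_le_filter_rel_iff_exists_injective E).1 fun X => by
    have hX := h X ({b | ∃ a ∈ X, E a b} : Finset β)ᶜ fun a ha b hb hE =>
      mem_compl.1 hb (mem_filter.2 ⟨mem_univ _, a, ha, hE⟩)
    rw [← card_add_card_compl ({b | ∃ a ∈ X, E a b} : Finset β)] at hX
    exact Nat.le_of_add_le_add_right hX
  exact ⟨.ofBijective f ((Fintype.bijective_iff_injective_and_card f).2 ⟨hinj, hcard⟩), hf⟩

theorem exists_matching_of_half_le_degree {n : ℕ} (hα : Fintype.card α = n)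
    (hβ : Fintype.card β = n) (hdα : ∀ a, (n : ℝ) / 2 ≤ #{b | E a b})
    (hdβ : ∀ b, (n : ℝ) / 2 ≤ #{a | E a b}) : ∃ σ : α ≃ β, ∀ a, E a (σ a) := by
  refine exists_matching_of_forall_card_add_card_le (hα.trans hβ.symm) fun X Y hXY => ?_
  rcases X.eq_empty_or_nonempty with rfl | ⟨a, ha⟩
  · simpa using card_le_univ Y
  rcases Y.eq_empty_or_nonempty with rfl | ⟨b, hb⟩
  · simpa [hα, hβ] using card_le_univ X
  have hX : (#X : ℝ) + #{a | E a b} ≤ n := by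
    exact_mod_cast hα ▸ card_add_card_filter_le X fun a ha => hXY a ha b hb
  have hY : (#Y : ℝ) + #{b | E a b} ≤ n := by
    exact_mod_cast hβ ▸ card_add_card_filter_le Y fun b hb => hXY a ha b hb
  rw [hβ]
  exact_mod_cast (by linarith [hdα a, hdβ b] : (#X : ℝ) + #Y ≤ n)

end Hall

section Blocks

variable {α β γ : Type*} {E : α → β → Prop} {f : α → γ} {g : β → γ} {G : ℝ}

lemma sq_le_card_mul_card_of_card_lt {S X : Finset α} {T Y : Finset β}
    (hXS : X ⊆ S) (hYT : Y ⊆ T) (hG : 0 ≤ G) (hST : #S = #T) (hXY : #T < #X + #Y)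
    (hdα : ∀ a ∈ X, G ≤ #{b ∈ T | E a b}) (hdβ : ∀ b ∈ Y, G ≤ #{a ∈ S | E a b})
    (hno : ∀ a ∈ X, ∀ b ∈ Y, ¬ E a b) : G ^ 2 ≤ (#X : ℝ) * #Y := by
  have hX := card_le_card hXS
  have hY := card_le_card hYT
  obtain ⟨a, ha⟩ := card_pos.1 (show 0 < #X by omega)
  obtain ⟨b, hb⟩ := card_pos.1 (show 0 < #Y by omega)
  have hYa : #{b ∈ T | E a b} + #Y ≤ #T := by
    rw [← card_union_of_disjoint (disjoint_right.2 fun b hb h => hno a ha b hb (mem_filter.1 h).2)]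
    exact card_le_card (union_subset (filter_subset _ _) hYT)
  have hXb : #{a ∈ S | E a b} + #X ≤ #S := by
    rw [← card_union_of_disjoint (disjoint_right.2 fun a ha h => hno a ha b hb (mem_filter.1 h).2)]
    exact card_le_card (union_subset (filter_subset _ _) hXS)
  have hGX : G ≤ #X := (hdα a ha).trans (mod_cast (by omega))
  have hGY : G ≤ #Y := (hdβ b hb).trans (mod_cast (by omega))
  calc G ^ 2 = G * G := sq G
    _ ≤ #X * #Y := by gcongr

variable [Fintype α] [Fintype β]

-- Work in a colour class where the Frobenius–König condition fails.
theorem exists_matching_of_blocks [Finite γ] (hfg : ∀ c, #{a | f a = c} = #{b | g b = c})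
    (hG : 0 ≤ G) (hdα : ∀ a, G ≤ #{b | f a = g b ∧ E a b})
    (hdβ : ∀ b, G ≤ #{a | f a = g b ∧ E a b})
    (hnon : (#{z : α × β | f z.1 = g z.2 ∧ ¬ E z.1 z.2} : ℝ) < G ^ 2) :
    ∃ σ : α ≃ β, ∀ a, f a = g (σ a) ∧ E a (σ a) := by
  cases nonempty_fintype γ
  have hα : Fintype.card α = ∑ c, #{a | f a = c} := card_eq_sum_card_fiberwise fun _ _ => mem_univ _
  have hβ : Fintype.card β = ∑ c, #{b | g b = c} := card_eq_sum_card_fiberwise fun _ _ => mem_univ _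
  refine exists_matching_of_forall_card_add_card_le (E := fun a b => f a = g b ∧ E a b)
    (hα.trans ((sum_congr rfl fun c _ => hfg c).trans hβ.symm)) fun X Y hXY => ?_
  by_contra! hlt
  rw [hβ, card_eq_sum_card_fiberwise (f := f) (s := X) fun _ _ => mem_univ _,
    card_eq_sum_card_fiberwise (f := g) (s := Y) fun _ _ => mem_univ _,
    ← sum_add_distrib] at hlt
  obtain ⟨c, -, hc⟩ := exists_lt_of_sum_lt hlt
  have hno : ∀ a ∈ X, f a = c → ∀ b ∈ Y, g b = c → ¬ E a b := fun a ha hac b hb hbc hE =>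
    hXY a ha b hb ⟨hac.trans hbc.symm, hE⟩
  have hsq := sq_le_card_mul_card_of_card_lt (E := E) (filter_subset_filter (f · = c) X.subset_univ)
    (filter_subset_filter (g · = c) Y.subset_univ) hG (hfg c) hc
    (fun a ha => (hdα a).trans_eq (by simp [filter_filter, (mem_filter.1 ha).2, eq_comm]))
    (fun b hb => (hdβ b).trans_eq (by simp [filter_filter, (mem_filter.1 hb).2]))
    fun a ha b hb => hno a (mem_filter.1 ha).1 (mem_filter.1 ha).2 b (mem_filter.1 hb).1
      (mem_filter.1 hb).2
  refine (hsq.trans ?_).not_gt hnon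
  rw [← Nat.cast_mul, ← card_product, Nat.cast_le]
  refine card_le_card fun z hz => ?_
  obtain ⟨ha, hb⟩ := mem_product.1 hz
  obtain ⟨ha, hac⟩ := mem_filter.1 ha
  obtain ⟨hb, hbc⟩ := mem_filter.1 hb
  exact mem_filter.2 ⟨mem_univ _, hac.trans hbc.symm, hno _ ha hac _ hb hbc⟩

lemma card_filter_apply_equiv (σ : α ≃ β) (p : β → Prop) [DecidablePred p] :
    #{x | p (σ x)} = #{b | p b} :=
  card_equiv σ fun x => by simp only [mem_filter, mem_univ, true_and]

lemma sq_le_card_hexagons_add (hG : 0 ≤ G) (hdα : ∀ a, G ≤ #{b | f a = g b ∧ E a b})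
    (hdβ : ∀ b, G ≤ #{a | f a = g b ∧ E a b}) {σ : α ≃ β}
    (hσ : ∀ a, f a = g (σ a) ∧ E a (σ a)) (a : α) :
    G ^ 2 ≤ (#(hexagons (fun x y => f x = g y ∧ E x y) σ a) : ℝ) +
      #{z : α × β | f z.1 = g z.2 ∧ ¬ E z.1 z.2} := by
  set X : Finset α := {x | f a = g (σ x) ∧ E a (σ x)} with hX
  set Y : Finset α := {y | f y = g (σ a) ∧ E y (σ a)} with hY
  set Z : Finset (α × α) := {z | f z.1 = g (σ z.2) ∧ ¬ E z.1 (σ z.2)} with hZ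
  have hcover : X ×ˢ Y ⊆ hexagons (fun x y => f x = g y ∧ E x y) σ a ∪ Z := by
    intro z hz
    simp only [hX, hY, hZ, hexagons, mem_product, mem_union, mem_filter, mem_univ,
      true_and] at hz ⊢
    have hcol : f z.1 = g (σ z.2) := by
      rw [(hσ z.1).1, ← hz.1.1, (hσ a).1, ← hz.2.1, (hσ z.2).1]
    tauto
  have hZcard : #Z = #{z : α × β | f z.1 = g z.2 ∧ ¬ E z.1 z.2} :=
    card_equiv ((Equiv.refl α).prodCongr σ) fun z => by simp [hZ]
  calc G ^ 2 = G * G := sq G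
    _ ≤ #X * #Y := by
        gcongr
        · exact (hdα a).trans_eq (mod_cast (card_filter_apply_equiv σ _).symm)
        · exact hdβ (σ a)
    _ = #(X ×ˢ Y) := by rw [card_product, Nat.cast_mul]
    _ ≤ _ := hZcard ▸ cast_card_le_add_of_subset_union hcover

theorem hasConflictFreeMatching_of_blocks [Finite γ] {C : α × β → α × β → Prop} {n : ℕ} {k c : ℝ}
    (hn : Fintype.card α = n) (hC : BoundedConflicts C k) (hk : 0 ≤ k) (hc : 0 < c) (hc1 : c ≤ 1)
    (hkn : k ≤ c ^ 4 / 1024 * n) (hcn : 40 ≤ c ^ 2 * n)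
    (hfg : ∀ i, #{a | f a = i} = #{b | g b = i})
    (hdα : ∀ a, c * n ≤ #{b | f a = g b ∧ E a b}) (hdβ : ∀ b, c * n ≤ #{a | f a = g b ∧ E a b})
    (hnon : (#{z : α × β | f z.1 = g z.2 ∧ ¬ E z.1 z.2} : ℝ) ≤ (c * n) ^ 2 / 2) :
    HasConflictFreeMatching E C := by
  have hn0 : (0 : ℝ) < n := pos_of_mul_pos_right (by linarith) (sq_nonneg c)
  obtain ⟨σ, hσ, hconf⟩ := hasConflictFreeMatching_of_hexagons
    (E := fun a b => f a = g b ∧ E a b) (κ := c ^ 2 / 2) hn hC hk (by nlinarith)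
    (hkn.trans_eq (by ring)) (by linarith)
    (fun σ hσ a => by
      linarith [sq_le_card_hexagons_add (by positivity) hdα hdβ hσ a])
    (exists_matching_of_blocks hfg (by positivity) hdα hdβ (hnon.trans_lt (half_lt_self
      (by positivity))))
  exact ⟨σ, fun a => (hσ a).2, hconf⟩

end Blocks

section NonExtremal

variable {α β : Type*} [Fintype α] [Fintype β] {E : α → β → Prop}

lemma card_edges_le_card_hexagons (σ : α ≃ β) (a : α) :
    #{z : α × β | z.1 ∈ ({x | E a (σ x)} : Finset α) ∧
      z.2 ∈ ({y | E (σ.symm y) (σ a)} : Finset β) ∧ E z.1 z.2} ≤ #(hexagons E σ a) := by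
  refine (card_equiv ((Equiv.refl α).prodCongr σ.symm) fun z => ?_).le
  simp only [hexagons, mem_filter, mem_univ, true_and, Equiv.prodCongr_apply, Equiv.coe_refl,
    Prod.map_fst, Prod.map_snd, id, Equiv.apply_symm_apply]
  tauto

theorem hasConflictFreeMatching_of_edges_between {C : α × β → α × β → Prop} {n : ℕ} {k κ : ℝ}
    (hα : Fintype.card α = n) (hβ : Fintype.card β = n) (hC : BoundedConflicts C k) (hk : 0 ≤ k)
    (hκ1 : κ ≤ 1) (hkn : k ≤ κ ^ 2 / 256 * n) (hκn : 20 ≤ κ * n)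
    (hdα : ∀ a, (n : ℝ) / 2 ≤ #{b | E a b}) (hdβ : ∀ b, (n : ℝ) / 2 ≤ #{a | E a b})
    (hedges : ∀ (S : Finset α) (T : Finset β), (n : ℝ) / 2 ≤ #S → (n : ℝ) / 2 ≤ #T →
      κ * n ^ 2 ≤ #{z : α × β | z.1 ∈ S ∧ z.2 ∈ T ∧ E z.1 z.2}) :
    HasConflictFreeMatching E C := by
  refine hasConflictFreeMatching_of_hexagons hα hC hk hκ1 hkn hκn (fun σ _ a => ?_)
    (exists_matching_of_half_le_degree hα hβ hdα hdβ)
  refine (hedges _ _ ?_ ?_).trans (Nat.cast_le.2 (card_edges_le_card_hexagons σ a))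
  · exact (hdα a).trans_eq (mod_cast (card_filter_apply_equiv σ _).symm)
  · exact (hdβ (σ a)).trans_eq (mod_cast (card_filter_apply_equiv σ.symm (E · (σ a))).symm)

end NonExtremal

section Choices

variable {D K : Type*} [Fintype D] [Fintype K] {𝓗 : Finset (Finset (D × K))} {I S : Finset D}

/-- The choices of one element of `K` in each block `d : D` that contain no forbidden configuration
`J ∈ 𝓗` lying entirely in the blocks of `I`. -/
noncomputable def choicesAvoiding (𝓗 : Finset (Finset (D × K))) (I : Finset D) : Finset (D → K) :=
  {f | ∀ J ∈ 𝓗, (∀ q ∈ J, q.1 ∈ I) → ¬ ∀ q ∈ J, f q.1 = q.2}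

lemma mem_choicesAvoiding {f : D → K} : f ∈ choicesAvoiding 𝓗 I ↔
    ∀ J ∈ 𝓗, (∀ q ∈ J, q.1 ∈ I) → ¬ ∀ q ∈ J, f q.1 = q.2 := by
  simp only [choicesAvoiding, mem_filter, mem_univ, true_and]

lemma choicesAvoiding_anti {I' : Finset D} (h : I ⊆ I') :
    choicesAvoiding 𝓗 I' ⊆ choicesAvoiding 𝓗 I := fun _ hf =>
  mem_choicesAvoiding.2 fun J hJ hJI => mem_choicesAvoiding.1 hf J hJ fun q hq => h (hJI q hq)

lemma mem_choicesAvoiding_of_eqOn_compl {f f' : D → K} (hIS : Disjoint I S)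
    (h : ∀ d ∉ S, f d = f' d) (hf : f ∈ choicesAvoiding 𝓗 I) : f' ∈ choicesAvoiding 𝓗 I :=
  mem_choicesAvoiding.2 fun J hJ hJI hf' => mem_choicesAvoiding.1 hf J hJ hJI fun q hq =>
    (h _ (disjoint_left.1 hIS (hJI q hq))).trans (hf' q hq)

lemma card_filter_eqOn_mul_le (𝓠 : Finset (D → K)) (φ : D → K)
    (h : ∀ f ∈ 𝓠, ∀ f', (∀ d ∉ S, f d = f' d) → f' ∈ 𝓠) :
    #{f ∈ 𝓠 | ∀ d ∈ S, f d = φ d} * Fintype.card K ^ #S ≤ #𝓠 := by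
  rw [← Fintype.card_coe S, ← Fintype.card_fun, ← card_univ, ← card_product]
  refine card_le_card_of_injOn (fun z d => if hd : d ∈ S then z.2 ⟨d, hd⟩ else z.1 d) ?_ ?_
  · intro z hz
    exact mem_coe.2 (h z.1 (mem_filter.1 (mem_product.1 (mem_coe.1 hz)).1).1 _ fun d hd => by
      simp only [dif_neg hd])
  · rintro ⟨f, g⟩ hz ⟨f', g'⟩ hz' heq
    have hf := (mem_filter.1 (mem_product.1 (mem_coe.1 hz)).1).2
    have hf' := (mem_filter.1 (mem_product.1 (mem_coe.1 hz')).1).2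
    refine Prod.ext (funext fun d => ?_) (funext fun d => ?_)
    · by_cases hd : d ∈ S
      · exact (hf d hd).trans (hf' d hd).symm
      · simpa only [dif_neg hd] using congrFun heq d
    · simpa only [dif_pos d.2] using congrFun heq d.1

lemma card_choicesAvoiding_le_two_pow_mul {n : ℕ}
    (h : ∀ I : Finset D, #I < n → ∀ i ∉ I,
      #(choicesAvoiding 𝓗 I) ≤ 2 * #(choicesAvoiding 𝓗 (insert i I)))
    (hSI : Disjoint S I) (hn : #I + #S ≤ n) :
    #(choicesAvoiding 𝓗 I) ≤ 2 ^ #S * #(choicesAvoiding 𝓗 (S ∪ I)) := by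
  induction S using Finset.induction_on with
  | empty => simp
  | insert s S hs ih =>
    rw [card_insert_of_notMem hs] at hn ⊢
    rw [disjoint_insert_left] at hSI
    calc #(choicesAvoiding 𝓗 I) ≤ 2 ^ #S * #(choicesAvoiding 𝓗 (S ∪ I)) :=
          ih hSI.2 (by omega)
      _ ≤ 2 ^ #S * (2 * #(choicesAvoiding 𝓗 (insert s (S ∪ I)))) := by
          gcongr
          refine h (S ∪ I) ?_ s (by simp [hs, hSI.1])
          rw [card_union_of_disjoint hSI.2]
          omega
      _ = 2 ^ (#S + 1) * #(choicesAvoiding 𝓗 (insert s S ∪ I)) := by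
          rw [insert_union, pow_succ, mul_assoc]

lemma card_choicesAvoiding_filter_mul_le {i : D} (hi : i ∉ I)
    (h : ∀ I' : Finset D, #I' < #I → ∀ j ∉ I',
      #(choicesAvoiding 𝓗 I') ≤ 2 * #(choicesAvoiding 𝓗 (insert j I')))
    {J : Finset (D × K)} (hiJ : ∃ q ∈ J, q.1 = i) (hJ : ∀ q ∈ J, q.1 ∈ insert i I) :
    #{f ∈ choicesAvoiding 𝓗 I | ∀ q ∈ J, f q.1 = q.2} * Fintype.card K ^ #J ≤
      2 ^ (#J - 1) * #(choicesAvoiding 𝓗 I) := by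
  rcases ({f ∈ choicesAvoiding 𝓗 I | ∀ q ∈ J, f q.1 = q.2}).eq_empty_or_nonempty with hemp | hne
  · rw [hemp, card_empty, zero_mul]
    exact Nat.zero_le _
  obtain ⟨φ, hφ⟩ := hne
  replace hφ := (mem_filter.1 hφ).2
  set S := J.image Prod.fst
  have hinj : Set.InjOn Prod.fst (J : Set (D × K)) := fun q hq q' hq' heq =>
    Prod.ext heq (by rw [← hφ q hq, ← hφ q' hq', heq])
  have hcard : #S = #J := card_image_of_injOn hinj
  have hiS : i ∈ S := mem_image.2 hiJ
  have hSI : S.erase i ∪ I \ S = I := by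
    ext x
    have hxS : x ∈ S → x ∈ insert i I := fun hx => by
      obtain ⟨q, hq, rfl⟩ := mem_image.1 hx
      exact hJ q hq
    grind
  have hdisj : Disjoint (S.erase i) (I \ S) := disjoint_sdiff.mono_left (erase_subset i S)
  calc #{f ∈ choicesAvoiding 𝓗 I | ∀ q ∈ J, f q.1 = q.2} * Fintype.card K ^ #J
      ≤ #{f ∈ choicesAvoiding 𝓗 (I \ S) | ∀ d ∈ S, f d = φ d} * Fintype.card K ^ #S := by
        rw [hcard]
        gcongr ?_ * _
        refine card_le_card fun f hf => ?_
        obtain ⟨hfI, hfJ⟩ := mem_filter.1 hf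
        refine mem_filter.2 ⟨choicesAvoiding_anti sdiff_subset hfI, fun d hd => ?_⟩
        obtain ⟨q, hq, rfl⟩ := mem_image.1 hd
        rw [hfJ q hq, hφ q hq]
    _ ≤ #(choicesAvoiding 𝓗 (I \ S)) := card_filter_eqOn_mul_le _ φ fun f hf f' hff' =>
        mem_choicesAvoiding_of_eqOn_compl sdiff_disjoint hff' hf
    _ ≤ 2 ^ (#J - 1) * #(choicesAvoiding 𝓗 I) := by
        have hchain := card_choicesAvoiding_le_two_pow_mul h hdisj
          (by rw [add_comm, ← card_union_of_disjoint hdisj, hSI])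
        rwa [hSI, card_erase_of_mem hiS, hcard] at hchain

lemma choicesAvoiding_subset_union_biUnion (i : D) :
    choicesAvoiding 𝓗 I ⊆ choicesAvoiding 𝓗 (insert i I) ∪
      univ.biUnion fun k : K => {J ∈ 𝓗 | (i, k) ∈ J ∧ ∀ q ∈ J, q.1 ∈ insert i I}.biUnion fun J =>
        {f ∈ choicesAvoiding 𝓗 I | ∀ q ∈ J, f q.1 = q.2} := by
  intro f hf
  by_contra hcon
  rw [mem_union, mem_choicesAvoiding] at hcon
  push Not at hcon
  obtain ⟨⟨J, hJ𝓗, hJ, hfJ⟩, hno⟩ := hcon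
  refine mem_choicesAvoiding.1 hf J hJ𝓗 (fun q hq => ?_) hfJ
  refine (mem_insert.1 (hJ q hq)).resolve_left fun hqi => hno ?_
  exact mem_biUnion.2 ⟨q.2, mem_univ _, mem_biUnion.2 ⟨J,
    mem_filter.2 ⟨hJ𝓗, hqi ▸ hq, hJ⟩, mem_filter.2 ⟨hf, hfJ⟩⟩⟩

variable [Nonempty K]

-- At most half of the choices avoiding `𝓗` on `I` meet a forbidden configuration using block `i`.
lemma card_choicesAvoiding_le_two_mul
    (hw : ∀ q : D × K, ∑ J ∈ 𝓗 with q ∈ J, (2 / (Fintype.card K : ℝ)) ^ (#J - 1) ≤ 1 / 2) :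
    ∀ i ∉ I, #(choicesAvoiding 𝓗 I) ≤ 2 * #(choicesAvoiding 𝓗 (insert i I)) := by
  induction h : #I using Nat.strong_induction_on generalizing I with
  | _ n ih =>
  subst h
  intro i hi
  have hm : (0 : ℝ) < Fintype.card K := mod_cast Fintype.card_pos
  set G := (#(choicesAvoiding 𝓗 I) : ℝ) with hG
  have hblock : ∀ k : K, (#({J ∈ 𝓗 | (i, k) ∈ J ∧ ∀ q ∈ J, q.1 ∈ insert i I}.biUnion fun J =>
      {f ∈ choicesAvoiding 𝓗 I | ∀ q ∈ J, f q.1 = q.2}) : ℝ) ≤ 1 / 2 * (G / Fintype.card K) := by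
    intro k
    calc _ ≤ ∑ J ∈ 𝓗 with (i, k) ∈ J ∧ ∀ q ∈ J, q.1 ∈ insert i I,
            (#{f ∈ choicesAvoiding 𝓗 I | ∀ q ∈ J, f q.1 = q.2} : ℝ) := mod_cast card_biUnion_le
      _ ≤ ∑ J ∈ 𝓗 with (i, k) ∈ J ∧ ∀ q ∈ J, q.1 ∈ insert i I,
            (2 / (Fintype.card K : ℝ)) ^ (#J - 1) * (G / Fintype.card K) := by
          refine sum_le_sum fun J hJ => ?_
          obtain ⟨-, hiJ, hJI⟩ := mem_filter.1 hJ
          have hle := card_choicesAvoiding_filter_mul_le hi (fun I' hI' => ih _ hI' rfl)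
            ⟨_, hiJ, rfl⟩ hJI
          have hJ1 : #J = #J - 1 + 1 := (Nat.succ_pred_eq_of_pos (card_pos.2 ⟨_, hiJ⟩)).symm
          rw [div_pow, div_mul_div_comm, ← pow_succ, ← hJ1, le_div_iff₀ (by positivity), hG]
          exact_mod_cast hle
      _ ≤ ∑ J ∈ 𝓗 with (i, k) ∈ J,
            (2 / (Fintype.card K : ℝ)) ^ (#J - 1) * (G / Fintype.card K) :=
          sum_le_sum_of_subset_of_nonneg (monotone_filter_right _ fun _ _ h => h.1)
            fun _ _ _ => by positivity
      _ ≤ 1 / 2 * (G / Fintype.card K) := by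
          rw [← sum_mul]
          exact mul_le_mul_of_nonneg_right (hw (i, k)) (by positivity)
  have hhalf : G ≤ #(choicesAvoiding 𝓗 (insert i I)) + ∑ _k : K, 1 / 2 * (G / Fintype.card K) :=
    (cast_card_le_add_of_subset_union (choicesAvoiding_subset_union_biUnion i)).trans <|
      add_le_add_right ((Nat.cast_le.2 card_biUnion_le).trans
        (by push_cast; exact sum_le_sum fun k _ => hblock k)) _
  rw [sum_const, card_univ, nsmul_eq_mul, mul_left_comm, mul_div_cancel₀ _ hm.ne'] at hhalf
  have hdouble : (#(choicesAvoiding 𝓗 I) : ℝ) ≤ 2 * #(choicesAvoiding 𝓗 (insert i I)) := by linarith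
  exact_mod_cast hdouble

-- Rosenfeld's counting method: processing the blocks one at a time, the number of admissible
-- choices at least halves at no step.
theorem exists_choice_avoiding (hne : ∀ J ∈ 𝓗, J.Nonempty)
    (hw : ∀ q : D × K, ∑ J ∈ 𝓗 with q ∈ J, (2 / (Fintype.card K : ℝ)) ^ (#J - 1) ≤ 1 / 2) :
    ∃ f : D → K, ∀ J ∈ 𝓗, ¬ ∀ q ∈ J, f q.1 = q.2 := by
  have hchain := card_choicesAvoiding_le_two_pow_mul (𝓗 := 𝓗)
    (fun I _ => card_choicesAvoiding_le_two_mul hw) (disjoint_empty_right univ) le_rfl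
  have hpos : 0 < #(choicesAvoiding 𝓗 (∅ : Finset D)) := by
    refine card_pos.2 ⟨fun _ => Classical.arbitrary K, mem_choicesAvoiding.2 fun J hJ h => ?_⟩
    obtain ⟨q, hq⟩ := hne J hJ
    exact absurd (h q hq) (notMem_empty _)
  obtain ⟨f, hf⟩ := card_pos.1 (Nat.pos_of_mul_pos_left (hpos.trans_le hchain))
  exact ⟨f, fun J hJ => mem_choicesAvoiding.1 hf J hJ fun q _ => mem_union_left _ (mem_univ _)⟩

end Choices

section Numerics

lemma sum_range_two_pow_succ (p : ℕ) :
    ∑ j ∈ range p, (2 : ℝ) ^ (j + 1) = 2 ^ (p + 1) - 2 := by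
  simp only [pow_succ, ← sum_mul, geom_sum_eq (by norm_num : (2 : ℝ) ≠ 1)]
  ring

lemma sum_range_mul_two_pow_succ_le (p : ℕ) :
    ∑ j ∈ range (p + 1), (1 + (↑(p - j) : ℝ)) * 2 ^ (j + 1) ≤ 8 * 2 ^ p := by
  induction p with
  | zero => norm_num
  | succ p ih =>
    have hshift : ∀ j ∈ range (p + 1), (1 + (↑(p + 1 - j) : ℝ)) * 2 ^ (j + 1) =
        (1 + (↑(p - j) : ℝ)) * 2 ^ (j + 1) + 2 ^ (j + 1) := by
      intro j hj
      rw [Nat.sub_add_comm (Nat.lt_succ_iff.1 (mem_range.1 hj))]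
      push_cast
      ring
    rw [sum_range_succ, sum_congr rfl hshift, sum_add_distrib, sum_range_two_pow_succ,
      Nat.sub_self, Nat.cast_zero]
    linarith [pow_succ (2 : ℝ) (p + 1), pow_succ (2 : ℝ) p]

lemma choose_mul_two_div_pow_le {L r k : ℕ} {m : ℝ} (hm : 0 < m)
    (h : 16 * (L : ℝ) / m + k ≤ r) : (L.choose r : ℝ) * (2 / m) ^ r ≤ (1 / 2) ^ k := by
  set x : ℝ := 16 * L / m
  have hx : 0 ≤ x := by positivity
  have hexp : Real.exp x ≤ 4 ^ r :=
    calc Real.exp x ≤ Real.exp r := Real.exp_le_exp.2 (by linarith [k.cast_nonneg (α := ℝ)])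
      _ = Real.exp 1 ^ r := by rw [← Real.exp_nat_mul, mul_one]
      _ ≤ 4 ^ r := by
          gcongr
          linarith [Real.exp_one_lt_d9]
  have hkr : k ≤ r := by exact_mod_cast (le_add_of_nonneg_left hx).trans h
  calc (L.choose r : ℝ) * (2 / m) ^ r ≤ (L : ℝ) ^ r / r.factorial * (2 / m) ^ r := by
        gcongr
        exact Nat.choose_le_pow_div r L
    _ = x ^ r / r.factorial * (1 / 8) ^ r := by
        rw [div_mul_eq_mul_div, div_mul_eq_mul_div, ← mul_pow, ← mul_pow]
        congr 2
        simp only [x]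
        ring
    _ ≤ 4 ^ r * (1 / 8) ^ r := by
        gcongr
        exact (Real.pow_div_factorial_le_exp x hx r).trans hexp
    _ = (1 / 2) ^ r := by rw [← mul_pow]; norm_num
    _ ≤ (1 / 2) ^ k := pow_le_pow_of_le_one (by norm_num) (by norm_num) hkr

lemma card_powersetCard_filter_mem_le {ι : Type*} [DecidableEq ι] {C : Finset ι} {q : ι}
    (hq : q ∈ C) (r : ℕ) : #{J ∈ C.powersetCard (r + 1) | q ∈ J} ≤ (#C - 1).choose r := by
  rw [← card_erase_of_mem hq, ← card_powersetCard]
  refine card_le_card_of_injOn (fun J => J.erase q) (fun J hJ => ?_) fun J hJ J' hJ' h => ?_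
  · obtain ⟨hJ, hqJ⟩ := mem_filter.1 (mem_coe.1 hJ)
    obtain ⟨hJC, hcard⟩ := mem_powersetCard.1 hJ
    refine mem_coe.2 (mem_powersetCard.2 ⟨erase_subset_erase _ hJC, ?_⟩)
    rw [card_erase_of_mem hqJ, hcard, Nat.add_sub_cancel]
  · dsimp only at h
    rw [← insert_erase (mem_filter.1 (mem_coe.1 hJ)).2, h,
      insert_erase (mem_filter.1 (mem_coe.1 hJ')).2]

lemma sum_union_le {X : Type*} [DecidableEq X] (s t : Finset X) {g : X → ℝ} (hg : ∀ x, 0 ≤ g x) :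
    ∑ x ∈ s ∪ t, g x ≤ ∑ x ∈ s, g x + ∑ x ∈ t, g x := by
  rw [← sum_union_inter]
  exact le_add_of_nonneg_right (sum_nonneg fun x _ => hg x)

lemma sum_biUnion_le {ι X : Type*} [DecidableEq X] (s : Finset ι) (t : ι → Finset X) {g : X → ℝ}
    (hg : ∀ x, 0 ≤ g x) : ∑ x ∈ s.biUnion t, g x ≤ ∑ i ∈ s, ∑ x ∈ t i, g x := by
  induction s using Finset.induction_on with
  | empty => simp
  | insert a s ha ih =>
    rw [biUnion_insert, sum_insert ha]
    exact (sum_union_le _ _ hg).trans (add_le_add_right ih _)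

end Numerics

section Crowding

variable {ι : Type*} [Fintype ι] {w : ι → ℕ} {m : ℝ} {p : ℕ}

/-- The elements whose weight lies in `[2 ^ j, 2 ^ (j + 1))`. -/
noncomputable def dyadicLevel (w : ι → ℕ) (j : ℕ) : Finset ι :=
  {q | w q ≠ 0 ∧ Nat.log 2 (w q) = j}

lemma mem_dyadicLevel {j : ℕ} {q : ι} : q ∈ dyadicLevel w j ↔ w q ≠ 0 ∧ Nat.log 2 (w q) = j := by
  simp only [dyadicLevel, mem_filter, mem_univ, true_and]

/-- The number of elements of the `j`-th dyadic level tolerated in a sparse selection: a multiple of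
the number expected when elements are selected with probability `1 / m`, plus a slack which grows
as the weight decreases from `2 ^ p`. -/
noncomputable def levelCap (w : ι → ℕ) (m : ℝ) (p j : ℕ) : ℕ :=
  ⌈16 * (#(dyadicLevel w j) : ℝ) / m⌉₊ + (p - j)

/-- The minimal sets that exceed the cap of a dyadic level. -/
noncomputable def crowdedSets (w : ι → ℕ) (m : ℝ) (p : ℕ) : Finset (Finset ι) :=
  (range (p + 1)).biUnion fun j => (dyadicLevel w j).powersetCard (levelCap w m p j + 1)

lemma crowdedSets_filter_mem_subset (q : ι) :
    {J ∈ crowdedSets w m p | q ∈ J} ⊆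
      {J ∈ (dyadicLevel w (Nat.log 2 (w q))).powersetCard
        (levelCap w m p (Nat.log 2 (w q)) + 1) | q ∈ J} := by
  intro J hJ
  obtain ⟨hJ, hqJ⟩ := mem_filter.1 hJ
  obtain ⟨j, -, hJ⟩ := mem_biUnion.1 hJ
  obtain rfl := (mem_dyadicLevel.1 ((mem_powersetCard.1 hJ).1 hqJ)).2
  exact mem_filter.2 ⟨hJ, hqJ⟩

lemma half_pow_sub_log_le {x : ℕ} (hx : x ≠ 0) (p : ℕ) :
    ((1 : ℝ) / 2) ^ (p - Nat.log 2 x) ≤ x / 2 ^ p := by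
  rw [div_pow, one_pow, div_le_div_iff₀ (by positivity) (by positivity), one_mul]
  calc (2 : ℝ) ^ p ≤ 2 ^ (Nat.log 2 x + (p - Nat.log 2 x)) := by
        gcongr
        · norm_num
        · omega
    _ = 2 ^ Nat.log 2 x * 2 ^ (p - Nat.log 2 x) := pow_add _ _ _
    _ ≤ x * 2 ^ (p - Nat.log 2 x) := by
        gcongr
        exact_mod_cast Nat.pow_log_le_self 2 hx

lemma sum_crowdedSets_le (hm : 0 < m) (w : ι → ℕ) (p : ℕ) (q : ι) :
    ∑ J ∈ crowdedSets w m p with q ∈ J, (2 / m) ^ (#J - 1) ≤ (w q : ℝ) / 2 ^ p := by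
  set j := Nat.log 2 (w q) with hj
  refine (sum_le_sum_of_subset_of_nonneg (crowdedSets_filter_mem_subset q)
    fun _ _ _ => by positivity).trans ?_
  rw [← hj]
  rcases eq_or_ne (w q) 0 with hq0 | hq0
  · rw [filter_false_of_mem fun J hJ hqJ =>
      (mem_dyadicLevel.1 ((mem_powersetCard.1 hJ).1 hqJ)).1 hq0, sum_empty]
    positivity
  have hcap : ∀ J ∈ {J ∈ (dyadicLevel w j).powersetCard (levelCap w m p j + 1) | q ∈ J},
      (2 / m) ^ (#J - 1) = (2 / m) ^ levelCap w m p j := fun J hJ => by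
    rw [(mem_powersetCard.1 (mem_filter.1 hJ).1).2, Nat.add_sub_cancel]
  have hchoose : (#{J ∈ (dyadicLevel w j).powersetCard (levelCap w m p j + 1) | q ∈ J} : ℝ) ≤
      (#(dyadicLevel w j)).choose (levelCap w m p j) :=
    mod_cast (card_powersetCard_filter_mem_le (mem_dyadicLevel.2 ⟨hq0, hj.symm⟩) _).trans
      (Nat.choose_le_choose _ (Nat.sub_le _ _))
  have hceil : 16 * (#(dyadicLevel w j) : ℝ) / m + ↑(p - j) ≤ levelCap w m p j := by
    rw [levelCap, Nat.cast_add]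
    exact add_le_add_left (Nat.le_ceil _) _
  calc ∑ J ∈ (dyadicLevel w j).powersetCard (levelCap w m p j + 1) with q ∈ J, (2 / m) ^ (#J - 1)
      = #{J ∈ (dyadicLevel w j).powersetCard (levelCap w m p j + 1) | q ∈ J} *
          (2 / m) ^ levelCap w m p j := by rw [sum_congr rfl hcap, sum_const, nsmul_eq_mul]
    _ ≤ (#(dyadicLevel w j)).choose (levelCap w m p j) * (2 / m) ^ levelCap w m p j := by gcongr
    _ ≤ (1 / 2) ^ (p - j) := choose_mul_two_div_pow_le hm hceil
    _ ≤ w q / 2 ^ p := half_pow_sub_log_le hq0 p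

lemma sum_card_dyadicLevel_mul_le (w : ι → ℕ) (s : Finset ℕ) :
    ∑ j ∈ s, #(dyadicLevel w j) * 2 ^ j ≤ ∑ q, w q :=
  calc ∑ j ∈ s, #(dyadicLevel w j) * 2 ^ j ≤ ∑ j ∈ s, ∑ q ∈ dyadicLevel w j, w q := by
        refine sum_le_sum fun j _ => ?_
        rw [← smul_eq_mul]
        refine card_nsmul_le_sum _ _ _ fun q hq => ?_
        obtain ⟨hq0, rfl⟩ := mem_dyadicLevel.1 hq
        exact Nat.pow_log_le_self 2 hq0
    _ = ∑ q ∈ s.biUnion (dyadicLevel w), w q := by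
        refine (sum_biUnion fun i _ j _ hij => disjoint_left.2 fun q hi hj => hij ?_).symm
        rw [← (mem_dyadicLevel.1 hi).2, (mem_dyadicLevel.1 hj).2]
    _ ≤ ∑ q, w q := sum_le_sum_of_subset (subset_univ _)

lemma sum_le_sum_card_dyadicLevel_mul {Q : Finset ι} (hw : ∀ q, w q ≤ 2 ^ p) :
    ∑ q ∈ Q, w q ≤ ∑ j ∈ range (p + 1), #(Q ∩ dyadicLevel w j) * 2 ^ (j + 1) := by
  have hsub : {q ∈ Q | w q ≠ 0} ⊆ (range (p + 1)).biUnion fun j => Q ∩ dyadicLevel w j := by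
    intro q hq
    obtain ⟨hqQ, hq0⟩ := mem_filter.1 hq
    refine mem_biUnion.2 ⟨Nat.log 2 (w q), mem_range.2 (Nat.lt_succ_of_le ?_),
      mem_inter.2 ⟨hqQ, mem_dyadicLevel.2 ⟨hq0, rfl⟩⟩⟩
    exact (Nat.log_mono_right (hw q)).trans_eq (Nat.log_pow one_lt_two p)
  rw [← sum_filter_ne_zero]
  calc ∑ q ∈ Q with w q ≠ 0, w q
      ≤ ∑ q ∈ (range (p + 1)).biUnion fun j => Q ∩ dyadicLevel w j, w q := sum_le_sum_of_subset hsub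
    _ ≤ ∑ j ∈ range (p + 1), ∑ q ∈ Q ∩ dyadicLevel w j, w q := by
        exact_mod_cast sum_biUnion_le (range (p + 1)) (fun j => Q ∩ dyadicLevel w j)
          (g := fun q => (w q : ℝ)) fun q => Nat.cast_nonneg _
    _ ≤ ∑ j ∈ range (p + 1), #(Q ∩ dyadicLevel w j) * 2 ^ (j + 1) := by
        refine sum_le_sum fun j _ => ?_
        rw [← smul_eq_mul]
        refine sum_le_card_nsmul _ _ _ fun q hq => ?_
        rw [← (mem_dyadicLevel.1 (mem_inter.1 hq).2).2]
        exact (Nat.lt_pow_succ_log_self one_lt_two _).le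

lemma card_inter_dyadicLevel_le {Q : Finset ι} (hQ : ∀ J ∈ crowdedSets w m p, ¬ J ⊆ Q) {j : ℕ}
    (hj : j ∈ range (p + 1)) : #(Q ∩ dyadicLevel w j) ≤ levelCap w m p j := by
  by_contra! hlt
  obtain ⟨J, hJ, hcard⟩ := exists_subset_card_eq (Nat.succ_le_of_lt hlt)
  exact hQ J (mem_biUnion.2 ⟨j, hj, mem_powersetCard.2 ⟨hJ.trans inter_subset_right, hcard⟩⟩)
    (hJ.trans inter_subset_left)

lemma sum_le_of_forall_crowdedSets (hm : 0 < m) {Q : Finset ι} (hw : ∀ q, w q ≤ 2 ^ p)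
    (hQ : ∀ J ∈ crowdedSets w m p, ¬ J ⊆ Q) :
    ((∑ q ∈ Q, w q : ℕ) : ℝ) ≤ 32 / m * (∑ q, w q : ℕ) + 8 * 2 ^ p := by
  have hmass : ∑ j ∈ range (p + 1), (#(dyadicLevel w j) : ℝ) * 2 ^ j ≤ (∑ q, w q : ℕ) := by
    exact_mod_cast sum_card_dyadicLevel_mul_le w (range (p + 1))
  calc ((∑ q ∈ Q, w q : ℕ) : ℝ)
      ≤ ∑ j ∈ range (p + 1), (#(Q ∩ dyadicLevel w j) : ℝ) * 2 ^ (j + 1) := by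
        exact_mod_cast sum_le_sum_card_dyadicLevel_mul hw
    _ ≤ ∑ j ∈ range (p + 1),
          (16 * (#(dyadicLevel w j) : ℝ) / m + (1 + (↑(p - j) : ℝ))) * 2 ^ (j + 1) := by
        gcongr with j hj
        have hcap : (#(Q ∩ dyadicLevel w j) : ℝ) ≤ levelCap w m p j :=
          mod_cast card_inter_dyadicLevel_le hQ hj
        rw [levelCap, Nat.cast_add] at hcap
        linarith [Nat.ceil_lt_add_one (show 0 ≤ 16 * (#(dyadicLevel w j) : ℝ) / m by positivity)]
    _ = 32 / m * ∑ j ∈ range (p + 1), (#(dyadicLevel w j) : ℝ) * 2 ^ j +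
          ∑ j ∈ range (p + 1), (1 + (↑(p - j) : ℝ)) * 2 ^ (j + 1) := by
        rw [mul_sum, ← sum_add_distrib]
        exact sum_congr rfl fun j _ => by ring
    _ ≤ 32 / m * (∑ q, w q : ℕ) + 8 * 2 ^ p :=
        add_le_add (by gcongr) (sum_range_mul_two_pow_succ_le p)

/-- The two-element sets of related elements. -/
noncomputable def relatedPairs (R : ι → ι → Prop) : Finset (Finset ι) :=
  {J | ∃ q q', R q q' ∧ q ≠ q' ∧ J = {q, q'}}

lemma sum_relatedPairs_le {R : ι → ι → Prop} (hsymm : ∀ q q', R q q' → R q' q) (hm : 0 < m)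
    (q : ι) : ∑ J ∈ relatedPairs R with q ∈ J, (2 / m) ^ (#J - 1) ≤ #{q' | R q q'} * (2 / m) := by
  have hsub : {J ∈ relatedPairs R | q ∈ J} ⊆
      ({q' | R q q' ∧ q ≠ q'} : Finset ι).image fun q' => {q, q'} := by
    intro J hJ
    simp only [relatedPairs, mem_filter, mem_univ, true_and] at hJ
    obtain ⟨⟨q₁, q₂, hR, hne, rfl⟩, hq⟩ := hJ
    rcases mem_insert.1 hq with rfl | hq
    · exact mem_image.2 ⟨q₂, mem_filter.2 ⟨mem_univ _, hR, hne⟩, rfl⟩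
    · obtain rfl := mem_singleton.1 hq
      exact mem_image.2 ⟨q₁, mem_filter.2 ⟨mem_univ _, hsymm _ _ hR, hne.symm⟩, pair_comm _ _⟩
  have hpair : ∀ J ∈ ({q' | R q q' ∧ q ≠ q'} : Finset ι).image fun q' => ({q, q'} : Finset ι),
      (2 / m) ^ (#J - 1) ≤ 2 / m := by
    intro J hJ
    obtain ⟨q', hq', rfl⟩ := mem_image.1 hJ
    rw [card_pair (mem_filter.1 hq').2.2, Nat.add_one_sub_one, pow_one]
  refine (sum_le_sum_of_subset_of_nonneg hsub fun _ _ _ => by positivity).trans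
    ((sum_le_card_nsmul _ _ _ hpair).trans ?_)
  rw [nsmul_eq_mul]
  gcongr
  exact card_image_le.trans (card_le_card (monotone_filter_right _ fun _ _ h => h.1))

/-- The configurations to be avoided by a selection that is free of related pairs and sparse for all
the weights `c v`. -/
noncomputable def spreadObstructions {V : Type*} [Fintype V] (c : V → ι → ℕ) (R : ι → ι → Prop)
    (m : ℝ) (p : ℕ) : Finset (Finset ι) :=
  relatedPairs R ∪ univ.biUnion fun v => crowdedSets (c v) m p

variable {V : Type*} [Fintype V] {c : V → ι → ℕ} {R : ι → ι → Prop}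

lemma exists_mem_spreadObstructions_of_related {q q' : ι} (hR : R q q') (hne : q ≠ q') :
    ∃ J ∈ spreadObstructions c R m p, ∀ x ∈ J, x = q ∨ x = q' :=
  ⟨{q, q'}, mem_union_left _ (mem_filter.2 ⟨mem_univ _, q, q', hR, hne, rfl⟩), fun _ hx => by
    simpa only [mem_insert, mem_singleton] using hx⟩

lemma crowdedSets_subset_spreadObstructions (v : V) :
    crowdedSets (c v) m p ⊆ spreadObstructions c R m p := fun _ hJ =>
  mem_union_right _ (mem_biUnion.2 ⟨v, mem_univ v, hJ⟩)

lemma nonempty_of_mem_spreadObstructions {J : Finset ι} (hJ : J ∈ spreadObstructions c R m p) :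
    J.Nonempty := by
  rcases mem_union.1 hJ with hJ | hJ
  · obtain ⟨q, q', -, -, rfl⟩ := (mem_filter.1 hJ).2
    exact insert_nonempty q {q'}
  · obtain ⟨v, -, hJ⟩ := mem_biUnion.1 hJ
    obtain ⟨j, -, hJ⟩ := mem_biUnion.1 hJ
    exact card_pos.1 ((mem_powersetCard.1 hJ).2 ▸ Nat.succ_pos _)

lemma sum_spreadObstructions_le (hm : 0 < m) (hsymm : ∀ q q', R q q' → R q' q)
    (hR : ∀ q, (#{q' | R q q'} : ℝ) ≤ m / 8) (hc : ∀ q, 8 * ∑ v, c v q ≤ 2 ^ p) (q : ι) :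
    ∑ J ∈ spreadObstructions c R m p with q ∈ J, (2 / m) ^ (#J - 1) ≤ 1 / 2 := by
  rw [spreadObstructions, filter_union, filter_biUnion]
  have hpairs : ∑ J ∈ relatedPairs R with q ∈ J, (2 / m) ^ (#J - 1) ≤ 1 / 4 :=
    calc _ ≤ #{q' | R q q'} * (2 / m) := sum_relatedPairs_le hsymm hm q
      _ ≤ m / 8 * (2 / m) := by gcongr; exact hR q
      _ = 1 / 4 := by field_simp; norm_num
  have hcrowd : ∑ v, ∑ J ∈ crowdedSets (c v) m p with q ∈ J, (2 / m) ^ (#J - 1) ≤ 1 / 8 :=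
    calc _ ≤ ∑ v, (c v q : ℝ) / 2 ^ p := sum_le_sum fun v _ => sum_crowdedSets_le hm (c v) p q
      _ ≤ 1 / 8 := by
          rw [← sum_div, div_le_div_iff₀ (by positivity) (by norm_num), one_mul, mul_comm]
          exact_mod_cast hc q
  have hnonneg : ∀ J : Finset ι, 0 ≤ (2 / m) ^ (#J - 1) := fun J => by positivity
  linarith [sum_union_le {J ∈ relatedPairs R | q ∈ J}
    (univ.biUnion fun v => {J ∈ crowdedSets (c v) m p | q ∈ J}) hnonneg,
    sum_biUnion_le univ (fun v => {J ∈ crowdedSets (c v) m p | q ∈ J}) hnonneg]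

end Crowding

section SpreadChoice

variable {V D K : Type*} [Fintype V] [Fintype D] [Fintype K] [Nonempty K]

theorem exists_spread_choice {c : V → D × K → ℕ} {R : D × K → D × K → Prop}
    (hsymm : ∀ q q', R q q' → R q' q)
    (hR : ∀ q, (#{q' | R q q'} : ℝ) ≤ (Fintype.card K : ℝ) / 8) {p : ℕ}
    (hc : ∀ q, 8 * ∑ v, c v q ≤ 2 ^ p) :
    ∃ f : D → K, (∀ i j, i ≠ j → ¬ R (i, f i) (j, f j)) ∧
      ∀ v, ((∑ i, c v (i, f i) : ℕ) : ℝ) ≤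
        32 / Fintype.card K * (∑ q, c v q : ℕ) + 8 * 2 ^ p := by
  have hm : (0 : ℝ) < Fintype.card K := mod_cast Fintype.card_pos
  obtain ⟨f, hf⟩ : ∃ f : D → K, ∀ J ∈ spreadObstructions c R (Fintype.card K : ℝ) p,
      ¬ ∀ q ∈ J, f q.1 = q.2 := by
    refine exists_choice_avoiding (fun J hJ => nonempty_of_mem_spreadObstructions hJ) fun q => ?_
    convert sum_spreadObstructions_le hm hsymm hR hc q
  have hinj : Function.Injective fun i => (i, f i) := fun i j h => congrArg Prod.fst h
  refine ⟨f, fun i j hij hRij => ?_, fun v => ?_⟩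
  · obtain ⟨J, hJ, hJij⟩ := exists_mem_spreadObstructions_of_related (c := c)
      (m := Fintype.card K) (p := p) hRij fun h => hij (hinj h)
    exact hf J hJ fun q hq => by rcases hJij q hq with rfl | rfl <;> rfl
  · have hw : ∀ q, c v q ≤ 2 ^ p := fun q =>
      calc c v q ≤ ∑ u, c u q :=
            single_le_sum (f := (c · q)) (fun _ _ => Nat.zero_le _) (mem_univ v)
        _ ≤ 8 * ∑ u, c u q := Nat.le_mul_of_pos_left _ (by norm_num)
        _ ≤ 2 ^ p := hc q
    have hload := sum_le_of_forall_crowdedSets hm (Q := univ.image fun i => (i, f i)) hw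
      fun J hJ hJf => hf J (crowdedSets_subset_spreadObstructions v hJ) fun q hq => by
        obtain ⟨i, -, rfl⟩ := mem_image.1 (hJf hq)
        rfl
    rwa [sum_image hinj.injOn] at hload

end SpreadChoice

section SpreadMatching

theorem exists_spread_subset {V ε : Type*} [Fintype V] {c : V → ε → ℕ} {R : ε → ε → Prop}
    (hsymm : ∀ e f, R e f → R f e) {X : Finset ε} {d m p : ℕ} (hm : 0 < m) (hX : d * m ≤ #X)
    (hR : ∀ e ∈ X, (#{f ∈ X | R e f} : ℝ) ≤ m / 8) (hc : ∀ e ∈ X, 8 * ∑ v, c v e ≤ 2 ^ p) :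
    ∃ M ⊆ X, #M = d ∧ (∀ e ∈ M, ∀ f ∈ M, e ≠ f → ¬ R e f) ∧
      ∀ v, ((∑ e ∈ M, c v e : ℕ) : ℝ) ≤ 32 / m * (∑ e ∈ X, c v e : ℕ) + 8 * 2 ^ p := by
  have : Nonempty (Fin m) := ⟨⟨0, hm⟩⟩
  obtain ⟨φ⟩ : Nonempty (Fin d × Fin m ↪ X) := Function.Embedding.nonempty_of_card_le (by
    rwa [Fintype.card_prod, Fintype.card_fin, Fintype.card_fin, Fintype.card_coe])
  have hφ : Function.Injective fun q => (φ q : ε) := Subtype.val_injective.comp φ.injective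
  have hRφ : ∀ q, (#{q' | R (φ q) (φ q')} : ℝ) ≤ Fintype.card (Fin m) / 8 := fun q => by
    rw [Fintype.card_fin]
    refine le_trans ?_ (hR _ (φ q).2)
    refine mod_cast card_le_card_of_injOn _ (fun q' hq' => ?_) hφ.injOn
    exact mem_coe.2 (mem_filter.2 ⟨(φ q').2, (mem_filter.1 (mem_coe.1 hq')).2⟩)
  obtain ⟨f, hfR, hfc⟩ := exists_spread_choice (c := fun v q => c v (φ q))
    (fun _ _ => hsymm _ _) hRφ fun q => hc _ (φ q).2
  have hinj : Function.Injective fun i => (φ (i, f i) : ε) :=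
    hφ.comp fun i j h => congrArg Prod.fst h
  refine ⟨univ.image fun i => (φ (i, f i) : ε), fun e he => ?_, ?_, ?_, fun v => ?_⟩
  · obtain ⟨i, -, rfl⟩ := mem_image.1 he
    exact (φ _).2
  · rw [card_image_of_injective _ hinj, card_univ, Fintype.card_fin]
  · intro e he e' he' hne
    obtain ⟨i, -, rfl⟩ := mem_image.1 he
    obtain ⟨j, -, rfl⟩ := mem_image.1 he'
    exact hfR i j fun h => hne (h ▸ rfl)
  · rw [sum_image hinj.injOn]
    refine (hfc v).trans ?_
    rw [Fintype.card_fin]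
    gcongr
    rw [← sum_image (f := c v) hφ.injOn]
    exact sum_le_sum_of_subset fun e he => by
      obtain ⟨q, -, rfl⟩ := mem_image.1 he
      exact (φ q).2

variable {α β : Type*} [Fintype α] [Fintype β] {C : α × β → α × β → Prop} {k : ℝ}

/-- The number of edges at a vertex of either side that are in conflict with the edge `e`. -/
noncomputable def conflictLoad (C : α × β → α × β → Prop) : α ⊕ β → α × β → ℕ
  | Sum.inl a, e => #{b | C e (a, b)}
  | Sum.inr b, e => #{a | C e (a, b)}

lemma sum_conflictLoad_le (hC : BoundedConflicts C k) (e : α × β) :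
    ((∑ v, conflictLoad C v e : ℕ) : ℝ) ≤ 2 * k := by
  have hα : ∑ a, #{b | C e (a, b)} = #{f | C e f} := by
    simpa only [mem_univ, true_and] using (card_filter_fst_mem (fun a b => C e (a, b)) univ).symm
  have hβ : ∑ b, #{a | C e (a, b)} = #{f | C e f} := by
    simpa only [mem_univ, true_and] using (card_filter_snd_mem (fun a b => C e (a, b)) univ).symm
  simp only [Fintype.sum_sum_type, conflictLoad, hα, hβ]
  push_cast
  linarith [hC.card_le e]

lemma sum_conflictLoad_at_le {n : ℕ} (hα : Fintype.card α = n) (hβ : Fintype.card β = n)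
    (hC : BoundedConflicts C k) (X : Finset (α × β)) (v : α ⊕ β) :
    ((∑ e ∈ X, conflictLoad C v e : ℕ) : ℝ) ≤ n * k := by
  rcases v with a | b
  · exact hβ ▸ hC.sum_card_le X fun b => (a, b)
  · exact hα ▸ hC.sum_card_le X fun a => (a, b)

/-- Two edges clash if they cannot lie together in a conflict-free matching: they share a vertex or
are in conflict. -/
def Clash (C : α × β → α × β → Prop) (e f : α × β) : Prop := e.1 = f.1 ∨ e.2 = f.2 ∨ C e f

lemma card_clash_le (hC : BoundedConflicts C k) {X : Finset (α × β)} {t : ℝ}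
    (htα : ∀ a, (#{b | (a, b) ∈ X} : ℝ) ≤ t) (htβ : ∀ b, (#{a | (a, b) ∈ X} : ℝ) ≤ t)
    (e : α × β) :
    (#{f ∈ X | Clash C e f} : ℝ) ≤ 2 * t + k := by
  have hcover : {f ∈ X | Clash C e f} ⊆
      ({b | (e.1, b) ∈ X} : Finset β).image (fun b => (e.1, b)) ∪
        (({a | (a, e.2) ∈ X} : Finset α).image (fun a => (a, e.2)) ∪ ({f | C e f} : Finset _)) := by
    intro f hf
    obtain ⟨hfX, h | h | h⟩ := mem_filter.1 hf
    · exact mem_union_left _ (mem_image.2 ⟨f.2, by simpa only [mem_filter, mem_univ, true_and, h],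
        by rw [h]⟩)
    · exact mem_union_right _ (mem_union_left _ (mem_image.2
        ⟨f.1, by simpa only [mem_filter, mem_univ, true_and, h], by rw [h]⟩))
    · exact mem_union_right _ (mem_union_right _ (mem_filter.2 ⟨mem_univ f, h⟩))
  calc (#{f ∈ X | Clash C e f} : ℝ)
      ≤ #{b | (e.1, b) ∈ X} + (#{a | (a, e.2) ∈ X} + #{f | C e f}) := by
        exact_mod_cast (card_le_card hcover).trans ((card_union_le _ _).trans
          (Nat.add_le_add card_image_le ((card_union_le _ _).trans
            (Nat.add_le_add_right card_image_le _))))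
    _ ≤ 2 * t + k := by linarith [htα e.1, htβ e.2, hC.card_le e]

theorem exists_spread_matching {n d m : ℕ} (hα : Fintype.card α = n)
    (hβ : Fintype.card β = n) (hC : BoundedConflicts C k) (hk : 1 ≤ k) (hm : 0 < m)
    (hnm : n ≤ 9 * m) {X : Finset (α × β)} (hX : d * m ≤ #X) {t : ℝ} (htm : 2 * t + k ≤ m / 8)
    (htα : ∀ a, (#{b | (a, b) ∈ X} : ℝ) ≤ t) (htβ : ∀ b, (#{a | (a, b) ∈ X} : ℝ) ≤ t) :
    ∃ M ⊆ X, #M = d ∧ (∀ e ∈ M, ∀ f ∈ M, e ≠ f → ¬ Clash C e f) ∧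
      (∀ a, (#{b | ∃ e ∈ M, C e (a, b)} : ℝ) ≤ 544 * k) ∧
      ∀ b, (#{a | ∃ e ∈ M, C e (a, b)} : ℝ) ≤ 544 * k := by
  obtain ⟨p, hpk, hkp⟩ := exists_nat_pow_near (x := 16 * k) (by linarith) one_lt_two
  have hc : ∀ e ∈ X, 8 * ∑ v, conflictLoad C v e ≤ 2 ^ (p + 1) := fun e _ => by
    have h : (8 * (∑ v, conflictLoad C v e : ℕ) : ℝ) ≤ 2 ^ (p + 1) := by
      linarith [sum_conflictLoad_le hC e]
    exact_mod_cast h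
  obtain ⟨M, hMX, hMd, hMR, hMc⟩ := exists_spread_subset (R := Clash C)
    (fun e f => Or.imp Eq.symm (Or.imp Eq.symm (hC.symm e f))) hm hX
    (fun e _ => (card_clash_le hC htα htβ e).trans htm) hc
  have hload : ∀ v, ((∑ e ∈ M, conflictLoad C v e : ℕ) : ℝ) ≤ 544 * k := fun v => by
    have : (0 : ℝ) < m := mod_cast hm
    have hnm' : (n : ℝ) ≤ 9 * m := mod_cast hnm
    calc ((∑ e ∈ M, conflictLoad C v e : ℕ) : ℝ)
        ≤ 32 / m * (∑ e ∈ X, conflictLoad C v e : ℕ) + 8 * 2 ^ (p + 1) := hMc v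
      _ ≤ 32 / m * (9 * m * k) + 8 * (2 * (16 * k)) := by
          rw [pow_succ']
          gcongr
          exact (sum_conflictLoad_at_le hα hβ hC X v).trans (by gcongr)
      _ = 544 * k := by field_simp; ring
  refine ⟨M, hMX, hMd, hMR, fun a => ?_, fun b => ?_⟩
  · exact (Nat.cast_le.2 (card_filter_exists_mem_le M _)).trans (hload (Sum.inl a))
  · exact (Nat.cast_le.2 (card_filter_exists_mem_le M _)).trans (hload (Sum.inr b))

end SpreadMatching

section Extension

variable {α β : Type*} {E : α → β → Prop} {C : α × β → α × β → Prop} {M : Finset (α × β)}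

lemma card_image_fst_of_not_clash (hM : ∀ e ∈ M, ∀ f ∈ M, e ≠ f → ¬ Clash C e f) :
    #(M.image Prod.fst) = #M :=
  card_image_of_injOn fun e he f hf h => by_contra fun hne => hM e he f hf hne (Or.inl h)

lemma card_image_snd_of_not_clash (hM : ∀ e ∈ M, ∀ f ∈ M, e ≠ f → ¬ Clash C e f) :
    #(M.image Prod.snd) = #M :=
  card_image_of_injOn fun e he f hf h => by_contra fun hne => hM e he f hf hne (Or.inr (Or.inl h))

lemma exists_equiv_image_fst_image_snd (hM : ∀ e ∈ M, ∀ f ∈ M, e ≠ f → ¬ Clash C e f) :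
    ∃ τ : {a // a ∈ M.image Prod.fst} ≃ {b // b ∈ M.image Prod.snd},
      ∀ a : {a // a ∈ M.image Prod.fst}, ((a : α), (τ a : β)) ∈ M := by
  let φ : M → {a // a ∈ M.image Prod.fst} := fun e => ⟨e.1.1, mem_image_of_mem _ e.2⟩
  let ψ : M → {b // b ∈ M.image Prod.snd} := fun e => ⟨e.1.2, mem_image_of_mem _ e.2⟩
  have hφ : Function.Bijective φ := by
    refine ⟨fun e f h => Subtype.ext (by_contra fun hne => ?_), fun a => ?_⟩
    · exact hM e e.2 f f.2 hne (Or.inl (congrArg Subtype.val h))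
    · obtain ⟨e, he, hea⟩ := mem_image.1 a.2
      exact ⟨⟨e, he⟩, Subtype.ext hea⟩
  have hψ : Function.Bijective ψ := by
    refine ⟨fun e f h => Subtype.ext (by_contra fun hne => ?_), fun b => ?_⟩
    · exact hM e e.2 f f.2 hne (Or.inr (Or.inl (congrArg Subtype.val h)))
    · obtain ⟨e, he, heb⟩ := mem_image.1 b.2
      exact ⟨⟨e, he⟩, Subtype.ext heb⟩
  refine ⟨(Equiv.ofBijective φ hφ).symm.trans (Equiv.ofBijective ψ hψ), fun a => ?_⟩
  obtain ⟨e, rfl⟩ := hφ.2 a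
  rw [Equiv.trans_apply, Equiv.ofBijective_symm_apply_apply]
  exact e.2

theorem hasConflictFreeMatching_of_extend (hsymm : ∀ e f, C e f → C f e)
    (hME : ∀ e ∈ M, E e.1 e.2) (hM : ∀ e ∈ M, ∀ f ∈ M, e ≠ f → ¬ Clash C e f)
    (hrest : HasConflictFreeMatching
      (fun (a : {a // a ∉ M.image Prod.fst}) (b : {b // b ∉ M.image Prod.snd}) =>
        E a b ∧ ∀ e ∈ M, ¬ C e (a, b))
      fun e f => C (e.1, e.2) (f.1, f.2)) :
    HasConflictFreeMatching E C := by
  obtain ⟨τ, hτ⟩ := exists_equiv_image_fst_image_snd hM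
  obtain ⟨ρ, hρE, hρC⟩ := hrest
  let σ : α ≃ β := (Equiv.sumCompl _).symm.trans ((Equiv.sumCongr τ ρ).trans (Equiv.sumCompl _))
  have hστ : ∀ a : {a // a ∈ M.image Prod.fst}, σ a = τ a := fun a => by
    simp only [σ, Equiv.trans_apply, Equiv.sumCompl_symm_apply_of_pos a.2]
    rfl
  have hσρ : ∀ a : {a // a ∉ M.image Prod.fst}, σ a = ρ a := fun a => by
    simp only [σ, Equiv.trans_apply, Equiv.sumCompl_symm_apply_of_neg a.2]
    rfl
  have hcases : ∀ a, (a, σ a) ∈ M ∨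
      ∃ a' : {a // a ∉ M.image Prod.fst}, a = a' ∧ σ a = ρ a' := fun a => by
    by_cases ha : a ∈ M.image Prod.fst
    · exact Or.inl (hστ ⟨a, ha⟩ ▸ hτ ⟨a, ha⟩)
    · exact Or.inr ⟨⟨a, ha⟩, rfl, hσρ ⟨a, ha⟩⟩
  refine ⟨σ, fun a => ?_, fun a a' hne hC => ?_⟩
  · rcases hcases a with ha | ⟨a, rfl, ha⟩
    · exact hME _ ha
    · exact ha ▸ (hρE a).1
  · rcases hcases a with ha | ⟨a, rfl, ha⟩ <;> rcases hcases a' with ha' | ⟨a', rfl, ha'⟩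
    · exact hM _ ha _ ha' (fun h => hne (congrArg Prod.fst h)) (Or.inr (Or.inr hC))
    · exact (hρE a').2 _ ha (ha' ▸ hC)
    · exact (hρE a).2 _ ha' (ha ▸ hsymm _ _ hC)
    · rw [ha, ha'] at hC
      exact hρC a a' (fun h => hne (congrArg Subtype.val h)) hC

end Extension

section CrossEdges

variable {α β : Type*} [Fintype α] [Fintype β] {E : α → β → Prop}

/-- The edges leading from `A` to the complement of `B`. -/
noncomputable def crossEdges (E : α → β → Prop) (A : Finset α) (B : Finset β) : Finset (α × β) :=
  {z | z.1 ∈ A ∧ z.2 ∉ B ∧ E z.1 z.2}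

lemma mem_crossEdges {A : Finset α} {B : Finset β} {z : α × β} :
    z ∈ crossEdges E A B ↔ z.1 ∈ A ∧ z.2 ∉ B ∧ E z.1 z.2 := by
  simp only [crossEdges, mem_filter, mem_univ, true_and]

lemma card_edges_add_card_nonedges_le_card_crossEdges_add (A : Finset α) (B : Finset β) :
    ∑ a ∈ A, #{b | E a b} + #{z : α × β | z.1 ∈ A ∧ z.2 ∈ B ∧ ¬ E z.1 z.2} ≤
      #(crossEdges E A B) + #A * #B := by
  have hdeg : ∀ a, #{b | E a b} + #{b | b ∈ B ∧ ¬ E a b} ≤ #{b | b ∉ B ∧ E a b} + #B := fun a => by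
    have hdisj : Disjoint ({b | E a b} : Finset β) ({b | b ∈ B ∧ ¬ E a b} : Finset β) :=
      disjoint_filter.2 fun b _ hE h => h.2 hE
    rw [← card_union_of_disjoint hdisj]
    refine (card_le_card fun b hb => ?_).trans (card_union_le _ _)
    simp only [mem_union, mem_filter, mem_univ, true_and] at hb ⊢
    tauto
  have hcross : #(crossEdges E A B) = ∑ a ∈ A, #{b | b ∉ B ∧ E a b} :=
    card_filter_fst_mem (fun a b => b ∉ B ∧ E a b) A
  rw [hcross, card_filter_fst_mem (fun a b => b ∈ B ∧ ¬ E a b) A, ← sum_add_distrib,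
    ← smul_eq_mul, ← sum_const, ← sum_add_distrib]
  exact sum_le_sum fun a _ => hdeg a

lemma card_mul_sub_add_card_nonedges_le_card_crossEdges {A : Finset α} (B : Finset β) {δ : ℝ}
    (hd : ∀ a, δ ≤ #{b | E a b}) :
    #A * (δ - #B) + #{z : α × β | z.1 ∈ A ∧ z.2 ∈ B ∧ ¬ E z.1 z.2} ≤ #(crossEdges E A B) := by
  have hcount : (∑ a ∈ A, (#{b | E a b} : ℝ)) +
      #{z : α × β | z.1 ∈ A ∧ z.2 ∈ B ∧ ¬ E z.1 z.2} ≤ #(crossEdges E A B) + #A * #B := by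
    exact_mod_cast card_edges_add_card_nonedges_le_card_crossEdges_add A B
  have hsum : #A * δ ≤ ∑ a ∈ A, (#{b | E a b} : ℝ) := by
    rw [← nsmul_eq_mul]
    exact card_nsmul_le_sum _ _ _ fun a _ => hd a
  linarith

lemma card_crossEdges_flip (E : α → β → Prop) (A : Finset α) (B : Finset β) :
    #(crossEdges (flip E) Bᶜ Aᶜ) = #(crossEdges E A B) :=
  card_equiv (Equiv.prodComm β α) fun z => by
    simp only [mem_crossEdges, mem_compl, not_not, Equiv.prodComm_apply, Prod.fst_swap,
      Prod.snd_swap, flip]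
    tauto

lemma card_sub_card_mul_le_card_crossEdges {A : Finset α} {B : Finset β} {n : ℝ}
    (hn : Fintype.card α = n) (hdα : ∀ a, n / 2 ≤ #{b | E a b}) (hdβ : ∀ b, n / 2 ≤ #{a | E a b})
    (hA : n / 4 ≤ #A) (hB : n / 4 ≤ #Bᶜ) : (#A - #B : ℝ) * (n / 8) ≤ #(crossEdges E A B) := by
  have hleft : #A * (n / 2 - #B) ≤ #(crossEdges E A B) :=
    (le_add_of_nonneg_right (Nat.cast_nonneg _)).trans
      (card_mul_sub_add_card_nonedges_le_card_crossEdges B hdα)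
  have hright : (#Bᶜ : ℝ) * (n / 2 - #Aᶜ) ≤ #(crossEdges E A B) := by
    rw [← card_crossEdges_flip]
    exact (le_add_of_nonneg_right (Nat.cast_nonneg _)).trans
      (card_mul_sub_add_card_nonedges_le_card_crossEdges Aᶜ hdβ)
  have hAc : (#A + #Aᶜ : ℝ) = n := by rw [← hn]; exact_mod_cast card_add_card_compl A
  have hn0 : 0 ≤ n := hn ▸ Nat.cast_nonneg _
  rcases le_total (#A - #B : ℝ) 0 with h | h
  · exact (mul_nonpos_of_nonpos_of_nonneg h (by positivity)).trans (Nat.cast_nonneg _)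
  rcases le_total ((#A - #B : ℝ) / 2) (n / 2 - #B) with h' | h'
  · nlinarith
  · nlinarith

end CrossEdges

section UnbalancedBlocks

lemma BoundedConflicts.comp_injective {ε ε' : Type*} [Fintype ε] [Fintype ε'] {C : ε → ε → Prop}
    {k : ℝ} (hC : BoundedConflicts C k) {φ : ε' → ε} (hφ : Function.Injective φ) :
    BoundedConflicts (fun e f => C (φ e) (φ f)) k where
  symm _ _ := hC.symm _ _
  card_le e := (Nat.cast_le.2 (card_le_card_of_injOn φ (fun _ hf => mem_coe.2 (mem_filter.2
    ⟨mem_univ _, (mem_filter.1 (mem_coe.1 hf)).2⟩)) hφ.injOn)).trans (hC.card_le (φ e))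

lemma card_filter_le_card_add_card_of_injective {ι κ : Type*} [Fintype ι] [Fintype κ]
    {φ : ι → κ} (hφ : Function.Injective φ) {P : ι → Prop} {Q R : κ → Prop}
    [DecidablePred P] [DecidablePred Q] [DecidablePred R] (h : ∀ i, P i → Q (φ i) ∨ R (φ i)) :
    (#{i | P i} : ℝ) ≤ #{j | Q j} + #{j | R j} := by
  rw [← card_image_of_injective _ hφ]
  refine cast_card_le_add_of_subset_union fun j hj => ?_
  obtain ⟨i, hi, rfl⟩ := mem_image.1 hj
  simpa only [mem_union, mem_filter, mem_univ, true_and] using h i (mem_filter.1 hi).2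

lemma card_filter_le_card_subtype_add {ι : Type*} [Fintype ι] [DecidableEq ι] {T : Finset ι}
    {P R : ι → Prop} {Q : {i // i ∉ T} → Prop} [DecidablePred P] [DecidablePred Q]
    [DecidablePred R] (h : ∀ i : {i // i ∉ T}, P i → Q i ∨ R i) :
    (#{i | P i} : ℝ) ≤ #{i | Q i} + (#T + #{i | R i}) := by
  have hcover : ({i | P i} : Finset ι) ⊆ ({i | Q i} : Finset {i // i ∉ T}).image Subtype.val ∪
      (T ∪ ({i | R i} : Finset ι)) := fun i hi => by
    by_cases hiT : i ∈ T
    · exact mem_union_right _ (mem_union_left _ hiT)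
    rcases h ⟨i, hiT⟩ (mem_filter.1 hi).2 with hQ | hR
    · exact mem_union_left _ (mem_image.2 ⟨_, mem_filter.2 ⟨mem_univ _, hQ⟩, rfl⟩)
    · exact mem_union_right _ (mem_union_right _ (mem_filter.2 ⟨mem_univ _, hR⟩))
  exact_mod_cast (card_le_card hcover).trans ((card_union_le _ _).trans
    (Nat.add_le_add card_image_le (card_union_le _ _)))

variable {α β : Type*} {A : Finset α} {B : Finset β}

/-- The bipartition into `A ∪ B` and its complement puts `a` and `b` on the same side. -/
def SameSide (A : Finset α) (B : Finset β) (a : α) (b : β) : Prop :=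
  a ∈ A ↔ b ∈ B

lemma sameSide_subtype {S : Finset α} {T : Finset β} {a : {a // a ∉ S}} {b : {b // b ∉ T}} :
    SameSide (A.subtype (· ∉ S)) (B.subtype (· ∉ T)) a b ↔ SameSide A B a b := by
  simp only [SameSide, mem_subtype]

variable [Fintype α] [Fintype β] {E : α → β → Prop} {δ η δ' η' : ℝ}

/-- The edges between `A` and `B` and between `Aᶜ` and `Bᶜ` form two nearly complete bipartite
graphs: they miss at most `η` pairs, and every vertex lies on at least `δ` of them. -/
structure NearBlocks (E : α → β → Prop) (A : Finset α) (B : Finset β) (δ η : ℝ) : Prop where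
  le_card_left : ∀ a, δ ≤ #{b | SameSide A B a b ∧ E a b}
  le_card_right : ∀ b, δ ≤ #{a | SameSide A B a b ∧ E a b}
  card_nonedges_le : (#{z : α × β | SameSide A B z.1 z.2 ∧ ¬ E z.1 z.2} : ℝ) ≤ η

lemma card_filter_mem_eq (hcard : Fintype.card α = Fintype.card β) (hAB : #A = #B) (p : Prop) :
    #{a | (a ∈ A) = p} = #{b | (b ∈ B) = p} := by
  by_cases hp : p
  · simpa only [hp, eq_iff_iff, iff_true, filter_univ_mem] using hAB
  · simp only [hp, eq_iff_iff, iff_false, filter_notMem_eq_sdiff, ← compl_eq_univ_sdiff,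
      card_compl, hcard, hAB]

theorem NearBlocks.hasConflictFreeMatching {C : α × β → α × β → Prop} {n : ℕ} {k c : ℝ}
    (h : NearBlocks E A B (c * n) ((c * n) ^ 2 / 2)) (hα : Fintype.card α = n)
    (hβ : Fintype.card β = n) (hAB : #A = #B) (hC : BoundedConflicts C k) (hk : 0 ≤ k) (hc : 0 < c)
    (hc1 : c ≤ 1) (hkn : k ≤ c ^ 4 / 1024 * n) (hcn : 40 ≤ c ^ 2 * n) :
    HasConflictFreeMatching E C := by
  refine hasConflictFreeMatching_of_blocks (f := (· ∈ A)) (g := (· ∈ B)) hα hC hk hc hc1 hkn hcn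
    (fun p => ?_) (fun a => ?_) (fun b => ?_) ?_
  · convert card_filter_mem_eq (hα.trans hβ.symm) hAB p
  · convert h.le_card_left a
    exact eq_iff_iff
  · convert h.le_card_right b
    exact eq_iff_iff
  · convert h.card_nonedges_le
    exact eq_iff_iff

lemma NearBlocks.mono (h : NearBlocks E A B δ η) (hδ : δ' ≤ δ) (hη : η ≤ η') :
    NearBlocks E A B δ' η' where
  le_card_left a := hδ.trans (h.le_card_left a)
  le_card_right b := hδ.trans (h.le_card_right b)
  card_nonedges_le := h.card_nonedges_le.trans hη

lemma NearBlocks.restrict (h : NearBlocks E A B δ η) {S : Finset α} {T : Finset β}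
    {E' : {a // a ∉ S} → {b // b ∉ T} → Prop} {R : α → β → Prop} [∀ a b, Decidable (R a b)]
    {s ℓ r : ℝ}
    (hS : #S ≤ s) (hT : #T ≤ s)
    (hER : ∀ (a : {a // a ∉ S}) (b : {b // b ∉ T}), E a b → E' a b ∨ R a b)
    (hRα : ∀ a, #{b | R a b} ≤ ℓ) (hRβ : ∀ b, #{a | R a b} ≤ ℓ)
    (hR : (#{z : α × β | R z.1 z.2} : ℝ) ≤ r) :
    NearBlocks E' (A.subtype (· ∉ S)) (B.subtype (· ∉ T)) (δ - (s + ℓ)) (η + r) where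
  le_card_left a := by
    have hcover := card_filter_le_card_subtype_add (T := T) (R := R a)
      (P := fun b => SameSide A B a b ∧ E a b)
      (Q := fun b => SameSide (A.subtype (· ∉ S)) (B.subtype (· ∉ T)) a b ∧ E' a b)
      fun b hb => (hER a b hb.2).imp_left fun hE => ⟨sameSide_subtype.2 hb.1, hE⟩
    linarith [h.le_card_left a, hRα a]
  le_card_right b := by
    have hcover := card_filter_le_card_subtype_add (T := S) (R := (R · b))
      (P := fun a => SameSide A B a b ∧ E a b)
      (Q := fun a => SameSide (A.subtype (· ∉ S)) (B.subtype (· ∉ T)) a b ∧ E' a b)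
      fun a ha => (hER a b ha.2).imp_left fun hE => ⟨sameSide_subtype.2 ha.1, hE⟩
    linarith [h.le_card_right b, hRβ b]
  card_nonedges_le := by
    refine (card_filter_le_card_add_card_of_injective (Subtype.val_injective.prodMap
      Subtype.val_injective) (P := fun z => SameSide _ _ z.1 z.2 ∧ ¬ E' z.1 z.2)
      fun z hz => ?_).trans (add_le_add h.card_nonedges_le hR)
    by_cases hE : E z.1 z.2
    · exact Or.inr ((hER z.1 z.2 hE).resolve_left hz.2)
    · exact Or.inl ⟨sameSide_subtype.1 hz.1, hE⟩

lemma NearBlocks.restrict_matching (h : NearBlocks E A B δ η) {C : α × β → α × β → Prop} {k ℓ : ℝ}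
    (hC : BoundedConflicts C k) {M : Finset (α × β)}
    (hM : ∀ e ∈ M, ∀ f ∈ M, e ≠ f → ¬ Clash C e f)
    (hloadα : ∀ a, #{b | ∃ e ∈ M, C e (a, b)} ≤ ℓ) (hloadβ : ∀ b, #{a | ∃ e ∈ M, C e (a, b)} ≤ ℓ) :
    NearBlocks (fun (a : {a // a ∉ M.image Prod.fst}) (b : {b // b ∉ M.image Prod.snd}) =>
      E a b ∧ ∀ e ∈ M, ¬ C e (a, b)) (A.subtype (· ∉ M.image Prod.fst))
      (B.subtype (· ∉ M.image Prod.snd)) (δ - (#M + ℓ)) (η + #M * k) := by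
  have htotal : (#{z : α × β | ∃ e ∈ M, C e (z.1, z.2)} : ℝ) ≤ #M * k := by
    simpa only [Subtype.exists, exists_prop, Fintype.card_coe] using
      hC.card_exists_le fun e : M => e.1
  have hsplit : ∀ a b, E a b → (E a b ∧ ∀ e ∈ M, ¬ C e (a, b)) ∨ ∃ e ∈ M, C e (a, b) :=
    fun a b hE => (em (∃ e ∈ M, C e (a, b))).symm.imp_left fun h =>
      ⟨hE, fun e he hCe => h ⟨e, he, hCe⟩⟩
  exact h.restrict (Nat.cast_le.2 (card_image_fst_of_not_clash hM).le)
    (Nat.cast_le.2 (card_image_snd_of_not_clash hM).le) (fun a b => hsplit a b) hloadα hloadβ htotal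

lemma card_subtype_notMem_of_disjoint {ι : Type*} {S T : Finset ι} (h : Disjoint S T) :
    #(S.subtype (· ∉ T)) = #S := by
  rw [card_subtype, filter_notMem_eq_sdiff, sdiff_eq_self_of_disjoint h]

lemma card_subtype_notMem_of_subset {ι : Type*} {S T : Finset ι} (h : T ⊆ S) :
    #(S.subtype (· ∉ T)) = #S - #T := by
  rw [card_subtype, filter_notMem_eq_sdiff, card_sdiff_of_subset h]

theorem NearBlocks.hasConflictFreeMatching_of_subset_crossEdges {C : α × β → α × β → Prop}
    {n : ℕ} (hn : 10 ^ 20 ≤ n) (hα : Fintype.card α = n) (hβ : Fintype.card β = n)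
    (hC : BoundedConflicts C (n / 10 ^ 20))
    (hblocks : NearBlocks E A B (n / 500) (38 / 10 ^ 8 * n ^ 2)) {M : Finset (α × β)}
    (hME : M ⊆ crossEdges E A B) (hM : ∀ e ∈ M, ∀ f ∈ M, e ≠ f → ¬ Clash C e f)
    (hAB : #A = #B + #M) (hMn : (#M : ℝ) ≤ n / 5000000)
    (hloadα : ∀ a, (#{b | ∃ e ∈ M, C e (a, b)} : ℝ) ≤ 544 * (n / 10 ^ 20))
    (hloadβ : ∀ b, (#{a | ∃ e ∈ M, C e (a, b)} : ℝ) ≤ 544 * (n / 10 ^ 20)) :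
    HasConflictFreeMatching E C := by
  have hn' : (10 : ℝ) ^ 20 ≤ n := mod_cast hn
  have hS : #(M.image Prod.fst) = #M := card_image_fst_of_not_clash hM
  have hT : #(M.image Prod.snd) = #M := card_image_snd_of_not_clash hM
  have hSA : M.image Prod.fst ⊆ A :=
    image_subset_iff.2 fun e he => (mem_crossEdges.1 (hME he)).1
  have hBT : Disjoint B (M.image Prod.snd) := disjoint_right.2 fun b hb => by
    obtain ⟨e, he, rfl⟩ := mem_image.1 hb
    exact (mem_crossEdges.1 (hME he)).2.1
  have hrest : ((n - #M : ℕ) : ℝ) = n - #M := Nat.cast_sub (hS ▸ hα ▸ card_le_univ _)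
  have hrestrict := hblocks.restrict_matching hC hM hloadα hloadβ
  have hinj : Function.Injective fun e : {a // a ∉ M.image Prod.fst} ×
      {b // b ∉ M.image Prod.snd} => ((e.1, e.2) : α × β) :=
    Subtype.val_injective.prodMap Subtype.val_injective
  refine hasConflictFreeMatching_of_extend hC.symm (fun e he => (mem_crossEdges.1 (hME he)).2.2) hM
    ((hrestrict.mono ?_ ?_).hasConflictFreeMatching (n := n - #M) (c := 1 / 1000) ?_ ?_ ?_
      (hC.comp_injective hinj) (by positivity) (by norm_num) (by norm_num) ?_ ?_)
  · rw [hrest]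
    linarith
  · rw [hrest]
    nlinarith [mul_le_mul_of_nonneg_right hMn (by positivity : (0 : ℝ) ≤ n / 10 ^ 20)]
  · rw [Fintype.card_subtype_compl, Fintype.card_coe, hα, hS]
  · rw [Fintype.card_subtype_compl, Fintype.card_coe, hβ, hT]
  · rw [card_subtype_notMem_of_subset hSA, card_subtype_notMem_of_disjoint hBT, hS, hAB,
      Nat.add_sub_cancel]
  · rw [hrest]
    linarith
  · rw [hrest]
    linarith

lemma card_filter_mem_crossEdges_left_le {t : ℝ} (ht : 0 ≤ t)
    (h : ∀ a ∈ A, #{b | b ∉ B ∧ E a b} ≤ t) (a : α) : #{b | (a, b) ∈ crossEdges E A B} ≤ t := by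
  simp only [mem_crossEdges]
  by_cases ha : a ∈ A
  · simpa only [ha, true_and] using h a ha
  · simpa only [ha, false_and, filter_false, card_empty, Nat.cast_zero] using ht

lemma card_filter_mem_crossEdges_right_le {t : ℝ} (ht : 0 ≤ t)
    (h : ∀ b ∉ B, #{a | a ∈ A ∧ E a b} ≤ t) (b : β) : #{a | (a, b) ∈ crossEdges E A B} ≤ t := by
  simp only [mem_crossEdges]
  by_cases hb : b ∈ B
  · simpa only [hb, not_true_eq_false, false_and, and_false, filter_false, card_empty,
      Nat.cast_zero] using ht
  · simpa only [hb, not_false_eq_true, true_and] using h b hb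

theorem NearBlocks.hasConflictFreeMatching_of_card_eq_add {C : α × β → α × β → Prop} {n d : ℕ}
    (hn : 10 ^ 20 ≤ n) (hα : Fintype.card α = n) (hβ : Fintype.card β = n)
    (hC : BoundedConflicts C (n / 10 ^ 20)) (hdα : ∀ a, (n : ℝ) / 2 ≤ #{b | E a b})
    (hdβ : ∀ b, (n : ℝ) / 2 ≤ #{a | E a b})
    (hblocks : NearBlocks E A B (n / 500) (38 / 10 ^ 8 * n ^ 2)) (hAB : #A = #B + d)
    (hd : (d : ℝ) ≤ n / 5000000) (hA : (n : ℝ) / 4 ≤ #A) (hB : (n : ℝ) / 4 ≤ #Bᶜ)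
    (hcross : d ≠ 0 → (∀ a ∈ A, (#{b | b ∉ B ∧ E a b} : ℝ) ≤ n / 400) ∧
      ∀ b ∉ B, (#{a | a ∈ A ∧ E a b} : ℝ) ≤ n / 400) :
    HasConflictFreeMatching E C := by
  have hn' : (10 : ℝ) ^ 20 ≤ n := mod_cast hn
  obtain ⟨M, hME, rfl, hM, hloadα, hloadβ⟩ : ∃ M ⊆ crossEdges E A B, #M = d ∧
      (∀ e ∈ M, ∀ f ∈ M, e ≠ f → ¬ Clash C e f) ∧
      (∀ a, (#{b | ∃ e ∈ M, C e (a, b)} : ℝ) ≤ 544 * (n / 10 ^ 20)) ∧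
      ∀ b, (#{a | ∃ e ∈ M, C e (a, b)} : ℝ) ≤ 544 * (n / 10 ^ 20) := by
    rcases eq_or_ne d 0 with rfl | hd0
    · have hload : (0 : ℝ) ≤ 544 * (n / 10 ^ 20) := by positivity
      exact ⟨∅, empty_subset _, rfl, by simp, fun a => by simpa using hload,
        fun b => by simpa using hload⟩
    have hm : (n : ℝ) / 8 - 1 ≤ (n / 8 : ℕ) := by
      have : n ≤ 8 * (n / 8) + 7 := by omega
      have : (n : ℝ) ≤ 8 * (n / 8 : ℕ) + 7 := mod_cast this
      linarith
    have hcount : (d * (n / 8 : ℕ) : ℝ) ≤ #(crossEdges E A B) := by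
      refine le_trans ?_ (card_sub_card_mul_le_card_crossEdges (congrArg Nat.cast hα) hdα hdβ hA hB)
      rw [hAB, Nat.cast_add, add_sub_cancel_left]
      exact mul_le_mul_of_nonneg_left Nat.cast_div_le d.cast_nonneg
    exact exists_spread_matching hα hβ hC (by linarith) (by omega) (by omega) (mod_cast hcount)
      (by linarith) (card_filter_mem_crossEdges_left_le (by positivity) (hcross hd0).1)
      (card_filter_mem_crossEdges_right_le (by positivity) (hcross hd0).2)
  exact hblocks.hasConflictFreeMatching_of_subset_crossEdges hn hα hβ hC hME hM hAB hd hloadα hloadβ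

end UnbalancedBlocks

section Stability

open scoped symmDiff

variable {α β : Type*} {E : α → β → Prop} {A A' : Finset α} {B B' : Finset β}

lemma card_sameSide_left_le_add_card_symmDiff [Fintype β] (B B' : Finset β) (a : α) :
    (#{b | SameSide A B a b ∧ E a b} : ℝ) ≤ #{b | SameSide A B' a b ∧ E a b} + #(B ∆ B') := by
  refine cast_card_le_add_of_subset_union fun b => ?_
  simp only [mem_union, mem_filter, mem_univ, true_and, mem_symmDiff]
  unfold SameSide
  tauto

lemma card_sameSide_right_le_add_card_symmDiff [Fintype α] (A A' : Finset α) (b : β) :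
    (#{a | SameSide A B a b ∧ E a b} : ℝ) ≤ #{a | SameSide A' B a b ∧ E a b} + #(A ∆ A') := by
  refine cast_card_le_add_of_subset_union fun a => ?_
  simp only [mem_union, mem_filter, mem_univ, true_and, mem_symmDiff]
  unfold SameSide
  tauto

variable [Fintype α] [Fintype β]

lemma card_nonedges_flip (A : Finset α) (B : Finset β) :
    #{z : β × α | z.1 ∈ B ∧ z.2 ∈ A ∧ ¬ flip E z.1 z.2} =
      #{z : α × β | z.1 ∈ A ∧ z.2 ∈ B ∧ ¬ E z.1 z.2} :=
  card_equiv (Equiv.prodComm β α) fun z => by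
    simp only [mem_filter, mem_univ, true_and, Equiv.prodComm_apply, Prod.fst_swap, Prod.snd_swap]
    unfold flip
    tauto

lemma card_sameSide_nonedges_le_add_card_symmDiff (A A' : Finset α) (B B' : Finset β) :
    #{z : α × β | SameSide A' B' z.1 z.2 ∧ ¬ E z.1 z.2} ≤
      #{z : α × β | SameSide A B z.1 z.2 ∧ ¬ E z.1 z.2} +
        (#(A ∆ A') * Fintype.card β + Fintype.card α * #(B ∆ B')) := by
  have hcover : ({z | SameSide A' B' z.1 z.2 ∧ ¬ E z.1 z.2} : Finset (α × β)) ⊆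
      ({z | SameSide A B z.1 z.2 ∧ ¬ E z.1 z.2} : Finset (α × β)) ∪
        ((A ∆ A') ×ˢ univ ∪ univ ×ˢ (B ∆ B')) := fun z => by
    simp only [mem_union, mem_filter, mem_univ, true_and, mem_symmDiff, mem_product,
      and_true]
    unfold SameSide
    tauto
  refine (card_le_card hcover).trans ((card_union_le _ _).trans
    (Nat.add_le_add_left ((card_union_le _ _).trans_eq ?_) _))
  rw [card_product, card_product, card_univ, card_univ]

lemma NearBlocks.of_symmDiff {n δ η s : ℝ} (hα : Fintype.card α = n) (hβ : Fintype.card β = n)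
    (hl : ∀ a, δ ≤ #{b | SameSide A' B a b ∧ E a b})
    (hr : ∀ b, δ ≤ #{a | SameSide A B' a b ∧ E a b})
    (hη : #{z : α × β | SameSide A B z.1 z.2 ∧ ¬ E z.1 z.2} ≤ η)
    (hs : #(A ∆ A') + #(B ∆ B') ≤ s) : NearBlocks E A' B' (δ - s) (η + s * n) where
  le_card_left a := by
    linarith [hl a, card_sameSide_left_le_add_card_symmDiff (A := A') (E := E) B B' a,
      Nat.cast_nonneg (α := ℝ) #(A ∆ A')]
  le_card_right b := by
    linarith [hr b, card_sameSide_right_le_add_card_symmDiff (B := B') (E := E) A A' b,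
      Nat.cast_nonneg (α := ℝ) #(B ∆ B')]
  card_nonedges_le := by
    have hmove : (#{z : α × β | SameSide A' B' z.1 z.2 ∧ ¬ E z.1 z.2} : ℝ) ≤
        #{z : α × β | SameSide A B z.1 z.2 ∧ ¬ E z.1 z.2} +
          (#(A ∆ A') * Fintype.card β + Fintype.card α * #(B ∆ B')) := by
      exact_mod_cast card_sameSide_nonedges_le_add_card_symmDiff A A' B B'
    rw [hα, hβ] at hmove
    nlinarith [mul_le_mul_of_nonneg_right hs (hα ▸ Nat.cast_nonneg (Fintype.card α) : 0 ≤ n)]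

lemma card_mul_le_card_filter_fst_mem {P : α → β → Prop} [∀ a b, Decidable (P a b)]
    {S T : Finset α} (hST : S ⊆ T) {t : ℝ} (h : ∀ a ∈ S, t ≤ #{b | P a b}) :
    #S * t ≤ #{z : α × β | z.1 ∈ T ∧ P z.1 z.2} := by
  rw [card_filter_fst_mem, ← nsmul_eq_mul, Nat.cast_sum]
  exact (card_nsmul_le_sum _ _ _ h).trans
    (sum_le_sum_of_subset_of_nonneg hST fun _ _ _ => Nat.cast_nonneg _)

lemma exists_majority_side_left {n ε : ℝ} (hn : 0 < n) (hd : ∀ a, n / 2 ≤ #{b | E a b})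
    (hB : n / 2 ≤ #Bᶜ) (hcross : #(crossEdges E A B) ≤ ε * n ^ 2)
    (hnon : #{z : α × β | z.1 ∈ Aᶜ ∧ z.2 ∈ Bᶜ ∧ ¬ E z.1 z.2} ≤ ε * n ^ 2) :
    ∃ A' : Finset α, (∀ a, n / 4 ≤ #{b | SameSide A' B a b ∧ E a b}) ∧
      #(A ∆ A') ≤ 8 * ε * n := by
  let A' : Finset α := {a | (#{b | b ∉ B ∧ E a b} : ℝ) < n / 4}
  have hA' : ∀ a, a ∈ A' ↔ (#{b | b ∉ B ∧ E a b} : ℝ) < n / 4 := fun a => by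
    simp only [A', mem_filter, mem_univ, true_and]
  refine ⟨A', fun a => ?_, ?_⟩
  · by_cases ha : a ∈ A'
    · have hsplit : (#{b | E a b} : ℝ) ≤ #{b | b ∈ B ∧ E a b} + #{b | b ∉ B ∧ E a b} := by
        refine cast_card_le_add_of_subset_union fun b => ?_
        simp only [mem_union, mem_filter, mem_univ, true_and]
        tauto
      simp only [SameSide, ha, true_iff]
      linarith [hd a, (hA' a).1 ha]
    · simp only [SameSide, ha, false_iff]
      exact not_lt.1 (mt (hA' a).2 ha)
  · have hleave : #(A \ A') * (n / 4) ≤ #(crossEdges E A B) := by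
      refine card_mul_le_card_filter_fst_mem sdiff_subset (P := fun a b => b ∉ B ∧ E a b)
        fun a ha => not_lt.1 (mt (hA' a).2 (mem_sdiff.1 ha).2)
    have henter : #(A' \ A) * (n / 4) ≤ #{z : α × β | z.1 ∈ Aᶜ ∧ z.2 ∈ Bᶜ ∧ ¬ E z.1 z.2} := by
      refine card_mul_le_card_filter_fst_mem (P := fun a b => b ∈ Bᶜ ∧ ¬ E a b)
        (fun a ha => mem_compl.2 (mem_sdiff.1 ha).2) fun a ha => ?_
      have hsplit : (#Bᶜ : ℝ) ≤ #{b | b ∈ Bᶜ ∧ ¬ E a b} + #{b | b ∉ B ∧ E a b} := by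
        refine cast_card_le_add_of_subset_union fun b => ?_
        simp only [mem_union, mem_filter, mem_univ, true_and, mem_compl]
        tauto
      linarith [(hA' a).1 (mem_sdiff.1 ha).1]
    have hsymm : (#(A ∆ A') : ℝ) ≤ #(A \ A') + #(A' \ A) :=
      cast_card_le_add_of_subset_union subset_rfl
    have : (#(A ∆ A') : ℝ) * n ≤ 8 * ε * n * n := by nlinarith
    exact le_of_mul_le_mul_right this hn

lemma exists_majority_side_right {n ε : ℝ} (hn : 0 < n) (hd : ∀ b, n / 2 ≤ #{a | E a b})
    (hA : n / 2 ≤ #A) (hcross : #(crossEdges E A B) ≤ ε * n ^ 2)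
    (hnon : #{z : α × β | z.1 ∈ A ∧ z.2 ∈ B ∧ ¬ E z.1 z.2} ≤ ε * n ^ 2) :
    ∃ B' : Finset β, (∀ b, n / 4 ≤ #{a | SameSide A B' a b ∧ E a b}) ∧ #(B ∆ B') ≤ 8 * ε * n := by
  obtain ⟨B', hB', hBB'⟩ := exists_majority_side_left (E := flip E) (A := Bᶜ) (B := Aᶜ) hn hd
    (by rwa [compl_compl]) (by rwa [card_crossEdges_flip])
    (by rwa [card_nonedges_flip, compl_compl, compl_compl])
  refine ⟨B'ᶜ, fun b => ?_, by rwa [← compl_symmDiff_compl, compl_compl]⟩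
  convert hB' b using 4
  simp only [SameSide, mem_compl, flip]
  tauto

lemma le_card_and_card_nonedges_le_of_card_crossEdges_le {n ε : ℝ} (hn : 0 < n)
    (hd : ∀ a, n / 2 ≤ #{b | E a b}) (hA : n / 2 ≤ #A) (hB : #B ≤ n / 2)
    (hcross : #(crossEdges E A B) ≤ ε * n ^ 2) :
    n / 2 - 2 * ε * n ≤ #B ∧ #{z : α × β | z.1 ∈ A ∧ z.2 ∈ B ∧ ¬ E z.1 z.2} ≤ ε * n ^ 2 := by
  have hcount := (card_mul_sub_add_card_nonedges_le_card_crossEdges B hd (A := A)).trans hcross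
  have hprod : n / 2 * (n / 2 - #B) ≤ #A * (n / 2 - #B) :=
    mul_le_mul_of_nonneg_right hA (sub_nonneg.2 hB)
  constructor
  · have : n * (n / 2 - #B) ≤ n * (2 * ε * n) := by
      linarith [Nat.cast_nonneg (α := ℝ) #{z : α × β | z.1 ∈ A ∧ z.2 ∈ B ∧ ¬ E z.1 z.2}]
    linarith [le_of_mul_le_mul_left this hn]
  · linarith [mul_nonneg (half_pos hn).le (sub_nonneg.2 hB)]

lemma abs_card_sub_le_of_symmDiff {ι : Type*} {S T : Finset ι} {x r s : ℝ}
    (hS : |(#S : ℝ) - x| ≤ r) (hST : #(S ∆ T) ≤ s) : |(#T : ℝ) - x| ≤ r + s := by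
  have hle : (#S : ℝ) ≤ #T + #(S ∆ T) := cast_card_le_add_of_subset_union fun i => by
    simp only [mem_union, mem_symmDiff]
    tauto
  have hge : (#T : ℝ) ≤ #S + #(S ∆ T) := cast_card_le_add_of_subset_union fun i => by
    simp only [mem_union, mem_symmDiff]
    tauto
  rw [abs_le] at hS ⊢
  constructor <;> linarith

theorem exists_nearBlocks_of_card_crossEdges_le {n ε : ℝ} (hn : 0 < n) (hε : ε ≤ 1 / 128)
    (hα : Fintype.card α = n) (hβ : Fintype.card β = n) (hdα : ∀ a, n / 2 ≤ #{b | E a b})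
    (hdβ : ∀ b, n / 2 ≤ #{a | E a b}) (hA : n / 2 ≤ #A) (hB : n / 2 ≤ #Bᶜ)
    (hcross : #(crossEdges E A B) ≤ ε * n ^ 2) :
    ∃ (A' : Finset α) (B' : Finset β), NearBlocks E A' B' (n / 8) (18 * ε * n ^ 2) ∧
      |#A' - n / 2| ≤ 10 * ε * n ∧ |#B' - n / 2| ≤ 10 * ε * n := by
  have hAc : (#A + #Aᶜ : ℝ) = n := by rw [← hα]; exact_mod_cast card_add_card_compl A
  have hBc : (#B + #Bᶜ : ℝ) = n := by rw [← hβ]; exact_mod_cast card_add_card_compl B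
  obtain ⟨hBε, hnonAB⟩ := le_card_and_card_nonedges_le_of_card_crossEdges_le hn hdα hA
    (by linarith : #B ≤ n / 2) hcross
  obtain ⟨hAε, hnonBA⟩ := le_card_and_card_nonedges_le_of_card_crossEdges_le (E := flip E) hn hdβ hB
    (by linarith : #Aᶜ ≤ n / 2) (by rwa [card_crossEdges_flip])
  rw [card_nonedges_flip] at hnonBA
  obtain ⟨A', hA', hAA'⟩ := exists_majority_side_left hn hdα hB hcross hnonBA
  obtain ⟨B', hB', hBB'⟩ := exists_majority_side_right hn hdβ hA hcross hnonAB
  have hnon : #{z : α × β | SameSide A B z.1 z.2 ∧ ¬ E z.1 z.2} ≤ 2 * ε * n ^ 2 := by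
    refine (cast_card_le_add_of_subset_union (fun z => ?_)).trans
      ((add_le_add hnonAB hnonBA).trans_eq (by ring))
    simp only [mem_union, mem_filter, mem_univ, true_and, mem_compl]
    unfold SameSide
    tauto
  refine ⟨A', B', (NearBlocks.of_symmDiff hα hβ hA' hB' hnon
    (add_le_add hAA' hBB')).mono ?_ ?_, ?_, ?_⟩
  · nlinarith
  · exact le_of_eq (by ring)
  · have hAn : |#A - (n : ℝ) / 2| ≤ 2 * ε * n := abs_le.2 ⟨by linarith, by linarith⟩
    exact (abs_card_sub_le_of_symmDiff hAn hAA').trans_eq (by ring)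
  · have hBn : |#B - (n : ℝ) / 2| ≤ 2 * ε * n := abs_le.2 ⟨by linarith, by linarith⟩
    exact (abs_card_sub_le_of_symmDiff hBn hBB').trans_eq (by ring)

end Stability

section Hubs

open scoped symmDiff

lemma exists_subset_subset_card_add_card {ι κ : Type*} (S : Finset ι) (T : Finset κ) (d : ℕ) :
    ∃ X ⊆ S, ∃ Y ⊆ T, #X + #Y ≤ d ∧ (#X + #Y = d ∨ X = S ∧ Y = T) := by
  rcases le_total d #S with hd | hd
  · obtain ⟨X, hXS, hX⟩ := exists_subset_card_eq hd
    exact ⟨X, hXS, ∅, empty_subset T, by simp [hX], .inl (by simp [hX])⟩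
  rcases le_total (d - #S) #T with hd' | hd'
  · obtain ⟨Y, hYT, hY⟩ := exists_subset_card_eq hd'
    exact ⟨S, subset_rfl, Y, hYT, by omega, .inl (by omega)⟩
  · exact ⟨S, subset_rfl, T, subset_rfl, by omega, .inr ⟨rfl, rfl⟩⟩

variable {α β : Type*} [Fintype α] [Fintype β] {E : α → β → Prop} {A X : Finset α}
  {B Y : Finset β} {δ η t : ℝ}

lemma exists_hubs (E : α → β → Prop) (A : Finset α) (B : Finset β) (t : ℝ) (d : ℕ) :
    ∃ X ⊆ A, ∃ Y, Disjoint B Y ∧ (∀ a ∈ X, t ≤ #{b | b ∉ B ∧ E a b}) ∧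
      (∀ b ∈ Y, t ≤ #{a | a ∈ A ∧ E a b}) ∧ #X + #Y ≤ d ∧
      (#X + #Y = d ∨ (∀ a ∈ A \ X, #{b | b ∉ B ∪ Y ∧ E a b} ≤ t) ∧
        ∀ b ∉ B ∪ Y, #{a | a ∈ A \ X ∧ E a b} ≤ t) := by
  obtain ⟨X, hXS, Y, hYT, hXYd, hXY⟩ := exists_subset_subset_card_add_card
    {a ∈ A | t ≤ #{b | b ∉ B ∧ E a b}} {b ∈ Bᶜ | t ≤ #{a | a ∈ A ∧ E a b}} d
  refine ⟨X, hXS.trans (filter_subset _ _), Y,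
    disjoint_right.2 fun b hb => mem_compl.1 (mem_filter.1 (hYT hb)).1,
    fun a ha => (mem_filter.1 (hXS ha)).2, fun b hb => (mem_filter.1 (hYT hb)).2, hXYd,
    hXY.imp_right ?_⟩
  rintro ⟨rfl, rfl⟩
  refine ⟨fun a ha => ?_, fun b hb => ?_⟩
  · simp only [mem_sdiff, mem_filter, not_and, not_le] at ha
    refine le_trans (Nat.cast_le.2 (card_le_card fun b => ?_)) (ha.2 ha.1).le
    simp only [mem_filter, mem_union, not_or]
    tauto
  · simp only [mem_union, mem_filter, mem_compl, not_or, not_and, not_le] at hb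
    refine le_trans (Nat.cast_le.2 (card_le_card fun a => ?_)) (hb.2 hb.1).le
    simp only [mem_filter, mem_sdiff]
    tauto

lemma NearBlocks.compl (h : NearBlocks E A B δ η) : NearBlocks E Aᶜ Bᶜ δ η := by
  have hside : ∀ a b, SameSide Aᶜ Bᶜ a b ↔ SameSide A B a b := fun a b => by
    simp only [SameSide, mem_compl, not_iff_not]
  refine ⟨fun a => ?_, fun b => ?_, ?_⟩
  · simpa only [hside] using h.le_card_left a
  · simpa only [hside] using h.le_card_right b
  · simpa only [hside] using h.card_nonedges_le

lemma NearBlocks.le_card_left_sdiff (h : NearBlocks E A B δ η) (htδ : t ≤ δ)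
    (hX : ∀ a ∈ X, t ≤ #{b | b ∉ B ∧ E a b}) (a : α) :
    t ≤ #{b | SameSide (A \ X) B a b ∧ E a b} := by
  by_cases ha : a ∈ X
  · simpa only [SameSide, mem_sdiff, ha, not_true_eq_false, and_false, false_iff] using hX a ha
  · have hside : ∀ b, SameSide (A \ X) B a b ↔ SameSide A B a b := fun b => by
      simp only [SameSide, mem_sdiff, ha, not_false_eq_true, and_true]
    simpa only [hside] using htδ.trans (h.le_card_left a)

lemma NearBlocks.le_card_right_union (h : NearBlocks E A B δ η) (htδ : t ≤ δ)
    (hY : ∀ b ∈ Y, t ≤ #{a | a ∈ A ∧ E a b}) (b : β) :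
    t ≤ #{a | SameSide A (B ∪ Y) a b ∧ E a b} := by
  by_cases hb : b ∈ Y
  · simpa only [SameSide, mem_union, hb, or_true, iff_true] using hY b hb
  · have hside : ∀ a, SameSide A (B ∪ Y) a b ↔ SameSide A B a b := fun a => by
      simp only [SameSide, mem_union, hb, or_false]
    simpa only [hside] using htδ.trans (h.le_card_right b)

lemma NearBlocks.move_hubs {n s : ℝ} (h : NearBlocks E A B δ η) (hα : Fintype.card α = n)
    (hβ : Fintype.card β = n) (htδ : t ≤ δ) (hX : ∀ a ∈ X, t ≤ #{b | b ∉ B ∧ E a b})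
    (hY : ∀ b ∈ Y, t ≤ #{a | a ∈ A ∧ E a b}) (hs : #X + #Y ≤ s) :
    NearBlocks E (A \ X) (B ∪ Y) (t - s) (η + s * n) := by
  have hAX : #(A ∆ (A \ X)) ≤ #X := card_le_card fun a => by
    simp only [mem_symmDiff, mem_sdiff]
    tauto
  have hBY : #(B ∆ (B ∪ Y)) ≤ #Y := card_le_card fun b => by
    simp only [mem_symmDiff, mem_union]
    tauto
  exact .of_symmDiff hα hβ (h.le_card_left_sdiff htδ hX) (h.le_card_right_union htδ hY)
    h.card_nonedges_le ((add_le_add (Nat.cast_le.2 hAX) (Nat.cast_le.2 hBY)).trans hs)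

-- A vertex with many crossing edges may be moved to the other block. Either this removes the
-- imbalance between the blocks, or afterwards the crossing edges are spread out.
theorem NearBlocks.hasConflictFreeMatching_of_card_le {C : α × β → α × β → Prop} {n : ℕ}
    (hn : 10 ^ 20 ≤ n) (hα : Fintype.card α = n) (hβ : Fintype.card β = n)
    (hC : BoundedConflicts C (n / 10 ^ 20)) (hdα : ∀ a, (n : ℝ) / 2 ≤ #{b | E a b})
    (hdβ : ∀ b, (n : ℝ) / 2 ≤ #{a | E a b})
    (hblocks : NearBlocks E A B (n / 8) (18 / 10 ^ 8 * n ^ 2)) (hBA : #B ≤ #A)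
    (hA : |#A - (n : ℝ) / 2| ≤ n / 10 ^ 7) (hB : |#B - (n : ℝ) / 2| ≤ n / 10 ^ 7) :
    HasConflictFreeMatching E C := by
  have hn' : (10 : ℝ) ^ 20 ≤ n := mod_cast hn
  rw [abs_le] at hA hB
  obtain ⟨X, hXA, Y, hBdisj, hX, hY, hXYd, hXY⟩ := exists_hubs E A B (n / 400) (#A - #B)
  have hXYA : (#X + #Y + #B : ℝ) ≤ #A := by exact_mod_cast (by omega : #X + #Y + #B ≤ #A)
  have hAX : #(A \ X) + #X = #A := card_sdiff_add_card_eq_card hXA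
  have hBY : #(B ∪ Y) = #B + #Y := card_union_of_disjoint hBdisj
  have hAX' : (#(A \ X) + #X : ℝ) = #A := mod_cast hAX
  have hBY' : (#(B ∪ Y) : ℝ) = #B + #Y := mod_cast hBY
  have hBYc : (#(B ∪ Y) + #(B ∪ Y)ᶜ : ℝ) = n := by
    rw [← hβ]
    exact_mod_cast card_add_card_compl (B ∪ Y)
  have hmoved : NearBlocks E (A \ X) (B ∪ Y) (n / 500) (38 / 10 ^ 8 * n ^ 2) :=
    (hblocks.move_hubs (s := n / 5000000) (congrArg _ hα) (congrArg _ hβ) (by linarith)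
      hX hY (by linarith)).mono (by linarith) (by linarith)
  refine hmoved.hasConflictFreeMatching_of_card_eq_add (d := #A - #B - (#X + #Y)) hn hα hβ hC hdα
    hdβ (by omega) ?_ (by linarith) (by linarith) fun hd => hXY.resolve_left fun h => hd (by omega)
  rw [Nat.cast_sub hXYd, Nat.cast_sub hBA]
  push_cast
  linarith

end Hubs

theorem hasConflictFreeMatching_of_min_degree {α β : Type*} [Fintype α] [Fintype β]
    {E : α → β → Prop} {C : α × β → α × β → Prop} {n : ℕ} (hn : 10 ^ 20 ≤ n)
    (hα : Fintype.card α = n) (hβ : Fintype.card β = n) (hC : BoundedConflicts C (n / 10 ^ 20))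
    (hdα : ∀ a, (n : ℝ) / 2 ≤ #{b | E a b}) (hdβ : ∀ b, (n : ℝ) / 2 ≤ #{a | E a b}) :
    HasConflictFreeMatching E C := by
  have hn' : (10 : ℝ) ^ 20 ≤ n := mod_cast hn
  by_cases hedges : ∀ (S : Finset α) (T : Finset β), (n : ℝ) / 2 ≤ #S → (n : ℝ) / 2 ≤ #T →
      1 / 10 ^ 8 * (n : ℝ) ^ 2 ≤ #{z : α × β | z.1 ∈ S ∧ z.2 ∈ T ∧ E z.1 z.2}
  · exact hasConflictFreeMatching_of_edges_between hα hβ hC (by positivity) (by norm_num)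
      (by linarith) (by linarith) hdα hdβ hedges
  push Not at hedges
  obtain ⟨S, T, hS, hT, hST⟩ := hedges
  obtain ⟨A, B, hblocks, hA, hB⟩ := exists_nearBlocks_of_card_crossEdges_le (ε := 1 / 10 ^ 8)
    (by linarith) (by norm_num) (congrArg _ hα) (congrArg _ hβ) hdα hdβ hS
    (B := Tᶜ) (by rwa [compl_compl]) (by simpa only [crossEdges, mem_compl, not_not] using hST.le)
  have hblocks' := hblocks.mono le_rfl (by linarith : _ ≤ 18 / 10 ^ 8 * (n : ℝ) ^ 2)
  have hA' : |#A - (n : ℝ) / 2| ≤ n / 10 ^ 7 := hA.trans_eq (by ring)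
  have hB' : |#B - (n : ℝ) / 2| ≤ n / 10 ^ 7 := hB.trans_eq (by ring)
  rcases le_total #B #A with hBA | hAB
  · exact hblocks'.hasConflictFreeMatching_of_card_le hn hα hβ hC hdα hdβ hBA hA' hB'
  · have hAc : (#A + #Aᶜ : ℝ) = n := by rw [← hα]; exact_mod_cast card_add_card_compl A
    have hBc : (#B + #Bᶜ : ℝ) = n := by rw [← hβ]; exact_mod_cast card_add_card_compl B
    rw [abs_le] at hA' hB'
    refine hblocks'.compl.hasConflictFreeMatching_of_card_le hn hα hβ hC hdα hdβ ?_
      (abs_le.2 ⟨?_, ?_⟩) (abs_le.2 ⟨?_, ?_⟩)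
    · rw [card_compl, card_compl, hα, hβ]
      omega
    all_goals linarith

section BipartiteGraphs

variable {V : Type*} {G : SimpleGraph V} {A B : Set V}

lemma injective_sym2_mk_of_disjoint (hdisj : Disjoint A B) :
    Function.Injective fun z : A × B => s((z.1 : V), (z.2 : V)) := fun z w h => by
  rcases Sym2.eq_iff.1 h with ⟨h₁, h₂⟩ | ⟨h₁, -⟩
  · exact Prod.ext (Subtype.ext h₁) (Subtype.ext h₂)
  · exact (Set.disjoint_left.1 hdisj z.1.2 (h₁ ▸ w.2.2)).elim

lemma card_filter_adj_left [Fintype B] (hG : G.IsBipartiteWith A B) (a : A) :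
    #{b : B | G.Adj a b} = (G.neighborSet a).ncard := by
  rw [SimpleGraph.isBipartiteWith_neighborSet hG a.2, ← Set.ncard_coe_finset,
    ← Set.ncard_image_of_injective _ Subtype.val_injective]
  congr 1
  ext v
  simp [and_comm]

lemma card_filter_adj_right [Fintype A] (hG : G.IsBipartiteWith A B) (b : B) :
    #{a : A | G.Adj a b} = (G.neighborSet b).ncard := by
  simpa only [G.adj_comm] using card_filter_adj_left hG.symm b

/-- Two pairs in `A × B` are in conflict with respect to `F` if they are edges of `G` which form a
pair in `F`. -/
def EdgeConflict (G : SimpleGraph V) (F : Set (Sym2 (Sym2 V))) (e f : A × B) : Prop :=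
  G.Adj e.1 e.2 ∧ G.Adj f.1 f.2 ∧ s(s((e.1 : V), (e.2 : V)), s((f.1 : V), (f.2 : V))) ∈ F

lemma boundedConflicts_edgeConflict [Finite V] [Fintype A] [Fintype B] (hdisj : Disjoint A B)
    {F : Set (Sym2 (Sym2 V))} {k : ℝ} (hk : 0 ≤ k)
    (hF : ∀ e ∈ G.edgeSet, (({f : Sym2 V | s(e, f) ∈ F}).ncard : ℝ) ≤ k) :
    BoundedConflicts (EdgeConflict (A := A) (B := B) G F) k where
  symm e f h := ⟨h.2.1, h.1, Sym2.eq_swap ▸ h.2.2⟩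
  card_le e := by
    by_cases he : G.Adj e.1 e.2
    · refine le_trans (Nat.cast_le.2 ?_) (hF s((e.1 : V), (e.2 : V)) he)
      rw [← Set.ncard_coe_finset]
      exact Set.ncard_le_ncard_of_injOn _ (fun f hf => (mem_filter.1 (mem_coe.1 hf)).2.2.2)
        (injective_sym2_mk_of_disjoint hdisj).injOn
    · rwa [filter_eq_empty_iff.2 fun f _ h => he h.1, card_empty, Nat.cast_zero]

/-- The spanning subgraph of `G` whose edges join each `a` in `A` to its partner `σ a` in `B`. -/
def matchingSubgraph (σ : A ≃ B) (hσ : ∀ a : A, G.Adj a (σ a)) : G.Subgraph where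
  verts := Set.univ
  Adj u v := ∃ a : A, s(u, v) = s((a : V), (σ a : V))
  adj_sub := fun {u v} ⟨a, h⟩ => by
    rw [← SimpleGraph.mem_edgeSet, h]
    exact hσ a
  edge_vert _ := Set.mem_univ _
  symm := ⟨fun _ _ ⟨a, h⟩ => ⟨a, Sym2.eq_swap.trans h⟩⟩

lemma mem_edgeSet_matchingSubgraph {σ : A ≃ B} {hσ : ∀ a : A, G.Adj a (σ a)} {e : Sym2 V} :
    e ∈ (matchingSubgraph σ hσ).edgeSet ↔ ∃ a : A, e = s((a : V), (σ a : V)) := by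
  induction e with | _ u v => exact Iff.rfl

lemma isPerfectMatching_matchingSubgraph (hAB : A ∪ B = Set.univ) (hdisj : Disjoint A B)
    (σ : A ≃ B) (hσ : ∀ a : A, G.Adj a (σ a)) : (matchingSubgraph σ hσ).IsPerfectMatching := by
  rw [SimpleGraph.Subgraph.isPerfectMatching_iff]
  intro v
  rcases (hAB ▸ Set.mem_univ v : v ∈ A ∪ B) with hv | hv
  · refine ⟨σ ⟨v, hv⟩, ⟨⟨v, hv⟩, rfl⟩, ?_⟩
    rintro w ⟨a, h⟩
    rcases Sym2.eq_iff.1 h with ⟨hva, hwa⟩ | ⟨hva, -⟩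
    · obtain rfl : (⟨v, hv⟩ : A) = a := Subtype.ext hva
      exact hwa
    · exact (Set.disjoint_left.1 hdisj hv (hva ▸ (σ a).2)).elim
  · refine ⟨σ.symm ⟨v, hv⟩, ⟨σ.symm ⟨v, hv⟩, ?_⟩, ?_⟩
    · rw [Equiv.apply_symm_apply, Sym2.eq_swap]
    rintro w ⟨a, h⟩
    rcases Sym2.eq_iff.1 h with ⟨hva, -⟩ | ⟨hva, hwa⟩
    · exact (Set.disjoint_left.1 hdisj (hva ▸ a.2) hv).elim
    · rw [hwa, (Equiv.symm_apply_eq σ).2 (Subtype.ext hva : (⟨v, hv⟩ : B) = σ a)]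

end BipartiteGraphs

end ConflictFreeMatching

open ConflictFreeMatching in
theorem conflict_free_PM_in_robust_expander_general {V : Type*} {n : ℕ} (hn : 10 ^ 20 ≤ n)
    (G : SimpleGraph V) (A B : Set V) (hG : G.IsBipartiteWith A B) (hAB : A ∪ B = Set.univ)
    (hA : A.ncard = n) (hB : B.ncard = n)
    (hdeg : ∀ v : V, (n : ℝ) / 2 ≤ ((G.neighborSet v).ncard : ℝ)) (F : Set (Sym2 (Sym2 V)))
    (hF : ∀ e ∈ G.edgeSet, (({f : Sym2 V | s(e, f) ∈ F}).ncard : ℝ) ≤ n / 10 ^ 20) :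
    ∃ M : G.Subgraph, M.IsPerfectMatching ∧
      ∀ e ∈ M.edgeSet, ∀ f ∈ M.edgeSet, e ≠ f → s(e, f) ∉ F := by
  have hAfin : A.Finite := Set.finite_of_ncard_ne_zero (by lia)
  have hBfin : B.Finite := Set.finite_of_ncard_ne_zero (by lia)
  have : Finite V := Set.finite_univ_iff.1 (hAB ▸ hAfin.union hBfin)
  have := hAfin.fintype
  have := hBfin.fintype
  obtain ⟨σ, hσ, hconf⟩ := hasConflictFreeMatching_of_min_degree hn
    ((Set.fintypeCard_eq_ncard A).trans hA) ((Set.fintypeCard_eq_ncard B).trans hB)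
    (boundedConflicts_edgeConflict hG.disjoint (by positivity) hF)
    (fun a => (hdeg a).trans_eq (congrArg _ (card_filter_adj_left hG a).symm))
    (fun b => (hdeg b).trans_eq (congrArg _ (card_filter_adj_right hG b).symm))
  refine ⟨matchingSubgraph σ hσ, isPerfectMatching_matchingSubgraph hAB hG.disjoint σ hσ, ?_⟩
  simp only [mem_edgeSet_matchingSubgraph]
  rintro _ ⟨a, rfl⟩ _ ⟨a', rfl⟩ hne hmem
  exact hconf a a' (fun h => hne (h ▸ rfl)) ⟨hσ a, hσ a', hmem⟩

/-- a bipartite robust (ν,τ)-expander on 2n vertices with minimum degree at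
least n/2 contains an F-conflict-free perfect matching for every μn-bounded system of
conflicts F for its edges. -/
theorem conflict_free_PM_in_robust_expander :
    ∀ τ : ℝ, τ ∈ Set.Ioo (0 : ℝ) 1 →
    ∃ ν₀ ∈ Set.Ioo (0 : ℝ) 1, ∀ ν ∈ Set.Ioc (0 : ℝ) ν₀,
    ∃ μ₀ : ℝ, 0 < μ₀ ∧ ∀ μ ∈ Set.Ioc (0 : ℝ) μ₀,
    ∃ n₀ : ℕ, ∀ n : ℕ, n₀ ≤ n →
      ∀ (V : Type) [Fintype V] (G : SimpleGraph V) (A B : Set V),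
        A ∪ B = Set.univ → Disjoint A B → A.ncard = n → B.ncard = n →
        (∀ u v : V, G.Adj u v → (u ∈ A ∧ v ∈ B) ∨ (u ∈ B ∧ v ∈ A)) →
        (∀ v : V, (n : ℝ) / 2 ≤ ((G.neighborSet v).ncard : ℝ)) →
        BipRobustExpander G A B n ν τ →
        ∀ F : Set (Sym2 (Sym2 V)),
          (∀ p ∈ F, ∀ e ∈ p, e ∈ G.edgeSet) →
          (∀ e ∈ G.edgeSet, (({f : Sym2 V | s(e, f) ∈ F}).ncard : ℝ) ≤ μ * n) →
          ∃ M : G.Subgraph, M.IsPerfectMatching ∧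
            ∀ e ∈ M.edgeSet, ∀ f ∈ M.edgeSet, e ≠ f → s(e, f) ∉ F :=
  fun τ _ => ⟨1 / 2, ⟨by norm_num, by norm_num⟩, fun ν _ => ⟨1 / 10 ^ 20, by positivity,
    fun μ hμ => ⟨10 ^ 20, fun n hn V _ G A B hAB hdisj hA hB hbip hdeg _ F _ hF =>
      conflict_free_PM_in_robust_expander_general hn G A B ⟨hdisj, hbip⟩ hAB hA hB hdeg F
        fun e he => (hF e he).trans <| (mul_le_mul_of_nonneg_right hμ.2 n.cast_nonneg).trans_eq
          (one_div_mul_eq_div _ _)⟩⟩⟩
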